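/- Let the input be a centered stationary Gaussian process {X_{j,k}} with absolutely continuous spectral measure of density f(x,y) = 1(−π/2 ≤ x ≤ π/2, −π/2 ≤ y ≤ π/2) on [−π,π]². Then μ_f is the law of 2π·B·W, where B and W are independent, B is Bernoulli(1/2) (taking values 0 and 1 with probability 1/2 each) and W has the Wigner semicircle law WSL(1); equivalently, μ_f = (1/2)δ_0 + (1/2)·WSL(4π²). In particular the limiting spectral distribution is not a continuous probability measure. -/

import Mathlib

/-!
The symmetrised matrix is `x + xᵀ` for a Gaussian array `x` with covariance `K ⊗ K / N`, where `K`
is the Toeplitz matrix of the Fourier coefficients of the spectral window `[-α, α]`. Gaussian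
integration by parts applied to the resolvent `R` of `x + xᵀ` gives the Schwinger–Dyson equation
`1 + z E[tr R] ≈ -2 E[(tr K R)²]` for normalized traces. Szegő-type asymptotics, that is Parseval's
identity for the window, show that `K` is asymptotically `2π` times a projection of rank
`N α / π`; hence `(2π - K)(x + xᵀ)` is negligible and `tr K R` is asymptotically an affine function
of `tr R`. No concentration estimate is needed, since the convergence of the empirical spectral
distribution is assumed. In the limit this is a quadratic equation for the Stieltjes transform,
whose solution is that of a mixture of an atom at `0` (the kernel of the projection) and a
semicircle law.
-/

open MeasureTheory ProbabilityTheory Filter Real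

noncomputable section

/-- The square `(-π, π]²` on which the spectral measure lives. -/
def specBox : Set (ℝ × ℝ) := Set.Ioc (-π) π ×ˢ Set.Ioc (-π) π

/-- `(1/N) ∑_j g(λ_j(A))`, the integral of `g` against the empirical spectral
distribution of a symmetric `N × N` real matrix `A` (junk value `0` if `A` is
not symmetric). -/
def esdEval {N : ℕ} (A : Matrix (Fin N) (Fin N) ℝ) (g : ℝ → ℝ) : ℝ :=
  if hA : A.IsHermitian then (N : ℝ)⁻¹ * ∑ j, g (hA.eigenvalues j) else 0

/-- The (random) empirical spectral distributions of `A N` converge weakly in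
probability to the probability measure `μ`: for every bounded continuous `g`,
`∫ g d(ESD(A N)) → ∫ g dμ` in probability. -/
def ESDTendstoInProb {Ω : Type*} [MeasurableSpace Ω] (P : Measure Ω)
    (A : (N : ℕ) → Ω → Matrix (Fin N) (Fin N) ℝ) (μ : Measure ℝ) : Prop :=
  ∀ g : ℝ → ℝ, Continuous g → (∃ C, ∀ x, |g x| ≤ C) →
    ∀ ε > 0, Tendsto (fun N => P {ω | ε ≤ |esdEval (A N ω) g - ∫ x, g x ∂μ|})
      atTop (nhds 0)

/-- The symmetric matrix `W_N/√N`, where `W_N(i,j) = X_{i,j} + X_{j,i}`,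
`1 ≤ i,j ≤ N`. -/
def scaledW {Ω : Type*} (X : ℤ → ℤ → Ω → ℝ) (N : ℕ) (ω : Ω) :
    Matrix (Fin N) (Fin N) ℝ :=
  fun i j => (Real.sqrt N)⁻¹ *
    (X ((i : ℕ) + 1) ((j : ℕ) + 1) ω + X ((j : ℕ) + 1) ((i : ℕ) + 1) ω)

/-- A centered stationary Gaussian process indexed by `ℤ²` with positive
variance: every finite real linear combination is a centered Gaussian random
variable, and second moments are shift invariant. -/
structure StatGauss {Ω : Type*} [MeasurableSpace Ω] (P : Measure Ω)
    (X : ℤ → ℤ → Ω → ℝ) : Prop where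
  meas : ∀ j k, Measurable (X j k)
  gauss : ∀ c : (ℤ × ℤ) →₀ ℝ, ∃ v : NNReal,
    P.map (fun ω => ∑ p ∈ c.support, c p * X p.1 p.2 ω) = gaussianReal 0 v
  var_pos : 0 < ∫ ω, (X 0 0 ω) ^ 2 ∂P
  stat : ∀ j k u v : ℤ,
    ∫ ω, X j k ω * X (j + u) (k + v) ω ∂P = ∫ ω, X 0 0 ω * X u v ω ∂P

/-- The process `X` has absolutely continuous spectral measure with density
`h` on `(-π,π]²`: `E[X_{0,0} X_{u,v}] = ∫∫ e^{i(ux+vy)} h(x,y) dx dy`. -/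
def HasSpecDensity {Ω : Type*} [MeasurableSpace Ω] (P : Measure Ω)
    (X : ℤ → ℤ → Ω → ℝ) (h : ℝ × ℝ → ℝ) : Prop :=
  ∀ u v : ℤ,
    (∫ q in specBox,
        Complex.exp (Complex.I * ((u * q.1 + v * q.2 : ℝ) : ℂ)) * ((h q : ℝ) : ℂ))
      = ((∫ ω, X 0 0 ω * X u v ω ∂P : ℝ) : ℂ)

/-- The Wigner semicircle law with variance `γ`: the measure on `ℝ` with
density `(2π√γ)⁻¹ √(4 - x²/γ) 1(|x| ≤ 2√γ)`. -/
def WSL (γ : ℝ) : Measure ℝ :=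
  volume.withDensity fun x => ENNReal.ofReal
    (if |x| ≤ 2 * Real.sqrt γ then
      (2 * π * Real.sqrt γ)⁻¹ * Real.sqrt (4 - x ^ 2 / γ) else 0)

section GaussianIntegrationByParts

lemma hasDerivAt_gaussianPDFReal (μ : ℝ) (v : NNReal) (x : ℝ) :
    HasDerivAt (gaussianPDFReal μ v) (-((x - μ) / v) * gaussianPDFReal μ v x) x := by
  have hexponent : HasDerivAt (fun x : ℝ => -(x - μ) ^ 2 / (2 * (v : ℝ))) (-((x - μ) / v)) x := by
    refine ((((hasDerivAt_id x).sub_const μ).pow 2).neg.div_const (2 * (v : ℝ))).congr_deriv ?_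
    simp [neg_div, mul_div_mul_left]
  rw [gaussianPDFReal_def]
  exact (hexponent.exp.const_mul _).congr_deriv (by ring)

lemma integrable_mul_gaussianPDFReal {v : NNReal} (hv : v ≠ 0) :
    Integrable fun x => x * gaussianPDFReal 0 v x := by
  have hid : Integrable id (gaussianReal 0 v) :=
    memLp_one_iff_integrable.1 (memLp_id_gaussianReal 1)
  rw [gaussianReal_of_var_ne_zero _ hv, integrable_withDensity_iff (measurable_gaussianPDF _ _)
    (by simp [gaussianPDF_lt_top])] at hid
  simpa [toReal_gaussianPDF] using hid

lemma integral_id_mul_gaussianReal {v : NNReal} {F F' : ℝ → ℂ} {C C' : ℝ}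
    (hF : ∀ s, HasDerivAt F (F' s) s) (hC : ∀ s, ‖F s‖ ≤ C) (hC' : ∀ s, ‖F' s‖ ≤ C') :
    ∫ x, (x : ℂ) * F x ∂gaussianReal 0 v = (v : ℂ) * ∫ x, F' x ∂gaussianReal 0 v := by
  rcases eq_or_ne v 0 with rfl | hv
  · simp
  have hv0 : (v : ℂ) ≠ 0 := by exact_mod_cast hv
  have hFm : AEStronglyMeasurable F :=
    (continuous_iff_continuousAt.2 fun s => (hF s).continuousAt).aestronglyMeasurable
  have hFm' : AEStronglyMeasurable F' := by
    rw [show F' = deriv F from funext fun s => (hF s).deriv.symm]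
    exact aestronglyMeasurable_deriv F _
  rw [integral_gaussianReal_eq_integral_smul hv, integral_gaussianReal_eq_integral_smul hv]
  simp only [Complex.real_smul]
  set p := gaussianPDFReal 0 v
  have hp : Integrable fun x => ((p x : ℝ) : ℂ) := (integrable_gaussianPDFReal 0 v).ofReal
  have hparts := integral_mul_deriv_eq_deriv_mul_of_integrable (u := F) (u' := F')
    (v := fun x => ((p x : ℝ) : ℂ)) (v' := fun x => ((-((x - 0) / v) * p x : ℝ) : ℂ))
    (fun x _ => hF x) (fun x _ => (hasDerivAt_gaussianPDFReal 0 v x).ofReal_comp) ?_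
    (hp.bdd_mul hFm' (ae_of_all _ hC')) (hp.bdd_mul hFm (ae_of_all _ hC))
  · calc ∫ x, (p x : ℂ) * (x * F x)
        = ∫ x, -(v : ℂ) * (F x * ((-((x - 0) / v) * p x : ℝ) : ℂ)) := by
          congr 1 with x
          push_cast
          field_simp
          rw [sub_zero]
          ring
      _ = v * ∫ x, F' x * (p x : ℂ) := by rw [integral_const_mul, hparts]; ring
      _ = v * ∫ x, (p x : ℂ) * F' x := by simp only [mul_comm]
  · have hxp : Integrable fun x => -((x - 0) / v) * p x :=
      ((integrable_mul_gaussianPDFReal hv).const_mul (-(v : ℝ)⁻¹)).congr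
        (ae_of_all _ fun x => by simp only [p]; ring)
    exact hxp.ofReal.bdd_mul hFm (ae_of_all _ hC)

variable {Ω ι : Type*} [MeasurableSpace Ω] {P : Measure Ω} {x : Ω → ι → ℝ} {a : ι} {c : ι → ℝ}

lemma map_eval_eq_gaussianReal (hx : HasGaussianLaw x P) (hmean : ∫ ω, x ω a ∂P = 0)
    (hcov : ∫ ω, x ω a * x ω a ∂P = c a) :
    P.map (fun ω => x ω a) = gaussianReal 0 (c a).toNNReal := by
  have := hx.isProbabilityMeasure
  have hLp : MemLp (fun ω => x ω a) 2 P := (hx.eval a).memLp_two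
  rw [(hx.eval a).map_eq_gaussianReal, hmean, variance_eq_sub hLp, hmean]
  simp [← hcov, sq]

section Regression

variable [Finite ι]

/- The residual `x - (x_a / c_a) c` of the linear regression of `x` on `x_a` is uncorrelated with,
hence independent of, `x_a`. -/
lemma indepFun_regression_residual (hx : HasGaussianLaw x P) (hmean : ∫ ω, x ω a ∂P = 0)
    (hcov : ∀ i, ∫ ω, x ω a * x ω i ∂P = c i) (hca : c a ≠ 0) :
    IndepFun (fun ω => x ω - (x ω a / c a) • c) (fun ω => x ω a) P := by
  cases nonempty_fintype ι
  have := hx.isProbabilityMeasure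
  have hLp (i : ι) : MemLp (fun ω => x ω i) 2 P := (hx.eval i).memLp_two
  have hint (i : ι) : Integrable (fun ω => x ω a * x ω i) P := (hLp a).integrable_mul (hLp i)
  let residual : (ι → ℝ) →L[ℝ] (ι → ℝ) :=
    .id ℝ (ι → ℝ) - ((c a)⁻¹ • ContinuousLinearMap.proj (R := ℝ) a).smulRight c
  let coord : (ι → ℝ) →L[ℝ] (Unit → ℝ) := .pi fun _ => .proj a
  have hres (ω : Ω) : residual (x ω) = x ω - (x ω a / c a) • c := by
    simp [residual, div_eq_inv_mul]
  have hjoint : HasGaussianLaw (fun ω => (fun i => (x ω - (x ω a / c a) • c) i,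
      fun _ : Unit => x ω a)) P := by
    simp only [← hres]
    exact hx.map (residual.prod coord)
  refine (hjoint.indepFun_of_covariance_eval fun i _ => ?_).comp (φ := id)
    (ψ := fun f : Unit → ℝ => f ()) measurable_id (measurable_pi_apply ())
  have hVLp : MemLp (fun ω => (x ω - (x ω a / c a) • c) i) 2 P := by
    refine ((hLp i).sub ((hLp a).const_mul (c i / c a))).ae_eq (ae_of_all _ fun ω => ?_)
    simp
    ring
  rw [covariance_eq_sub hVLp (hLp a), hmean, mul_zero, sub_zero]
  calc ∫ ω, (x ω - (x ω a / c a) • c) i * x ω a ∂P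
      = ∫ ω, (x ω a * x ω i - c i / c a * (x ω a * x ω a)) ∂P := by
        congr 1 with ω
        simp
        ring
    _ = 0 := by
        rw [integral_sub (hint i) ((hint a).const_mul _), integral_const_mul, hcov, hcov]
        field_simp
        ring

lemma map_residual_prod_eval (hx : HasGaussianLaw x P) (hmean : ∫ ω, x ω a ∂P = 0)
    (hcov : ∀ i, ∫ ω, x ω a * x ω i ∂P = c i) (hca : c a ≠ 0) :
    P.map (fun ω => (x ω - (x ω a / c a) • c, x ω a)) =
      (P.map fun ω => x ω - (x ω a / c a) • c).prod (gaussianReal 0 (c a).toNNReal) := by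
  have := hx.isProbabilityMeasure
  have hxa : AEMeasurable (fun ω => x ω a) P := (hx.eval a).aemeasurable
  rw [(indepFun_iff_map_prod_eq_prod_map_map (hx.aemeasurable.fun_sub (by fun_prop)) hxa).1
    (indepFun_regression_residual hx hmean hcov hca), map_eval_eq_gaussianReal hx hmean (hcov a)]

lemma integral_comp_eq_integral_regression (hx : HasGaussianLaw x P)
    (hmean : ∫ ω, x ω a ∂P = 0) (hcov : ∀ i, ∫ ω, x ω a * x ω i ∂P = c i) (hca : c a ≠ 0)
    {G : ℝ → (ι → ℝ) → ℂ} (hG : Continuous fun q : (ι → ℝ) × ℝ => G q.2 q.1)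
    (hint : Integrable (fun ω => G (x ω a) (x ω)) P) :
    ∫ ω, G (x ω a) (x ω) ∂P = ∫ w, ∫ s, G s (w + (s / c a) • c)
      ∂gaussianReal 0 (c a).toNNReal ∂P.map fun ω => x ω - (x ω a / c a) • c := by
  have := hx.isProbabilityMeasure
  have hxa : AEMeasurable (fun ω => x ω a) P := (hx.eval a).aemeasurable
  have hpair : AEMeasurable (fun ω => (x ω - (x ω a / c a) • c, x ω a)) P :=
    (hx.aemeasurable.fun_sub (by fun_prop)).prodMk hxa
  have hGreg : Continuous fun q : (ι → ℝ) × ℝ => G q.2 (q.1 + (q.2 / c a) • c) :=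
    hG.comp (f := fun q : (ι → ℝ) × ℝ => (q.1 + (q.2 / c a) • c, q.2)) (by fun_prop)
  have hlaw := map_residual_prod_eval hx hmean hcov hca
  rw [← integral_prod (fun q : (ι → ℝ) × ℝ => G q.2 (q.1 + (q.2 / c a) • c)), ← hlaw,
    integral_map hpair hGreg.aestronglyMeasurable]
  · simp only [sub_add_cancel]
  · rw [← hlaw, integrable_map_measure hGreg.aestronglyMeasurable hpair]
    simpa only [Function.comp_def, sub_add_cancel] using hint

end Regression

lemma covariance_row_eq_zero (hx : Integrable (fun ω => x ω a * x ω a) P)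
    (hcov : ∀ i, ∫ ω, x ω a * x ω i ∂P = c i) (hca : c a = 0) :
    (∀ᵐ ω ∂P, x ω a = 0) ∧ c = 0 := by
  have hxa : ∀ᵐ ω ∂P, x ω a = 0 := by
    have hsq := (integral_eq_zero_iff_of_nonneg (fun ω => mul_self_nonneg (x ω a)) hx).1
      ((hcov a).trans hca)
    filter_upwards [hsq] with ω hω using mul_self_eq_zero.1 hω
  refine ⟨hxa, funext fun i => ?_⟩
  rw [← hcov i, Pi.zero_apply]
  refine integral_eq_zero_of_ae ?_
  filter_upwards [hxa] with ω hω
  simp [hω]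

lemma integral_id_mul_comp_line {F F' : (ι → ℝ) → ℂ} {C C' b : ℝ} (hb : 0 < b)
    (hC : ∀ y, ‖F y‖ ≤ C) (hC' : ∀ y, ‖F' y‖ ≤ C')
    (hderiv : ∀ y, HasDerivAt (fun s : ℝ => F (y + s • c)) (F' y) 0) (w : ι → ℝ) :
    ∫ s, (s : ℂ) * F (w + (s / b) • c) ∂gaussianReal 0 b.toNNReal =
      ∫ s, F' (w + (s / b) • c) ∂gaussianReal 0 b.toNNReal := by
  have hline (s : ℝ) : HasDerivAt (fun s : ℝ => F (w + (s / b) • c))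
      ((b⁻¹ : ℂ) * F' (w + (s / b) • c)) s := by
    have hshift : HasDerivAt (fun u : ℝ => u / b - s / b) b⁻¹ s := by
      simpa using ((hasDerivAt_id s).div_const b).sub_const (s / b)
    have hcomp := HasDerivAt.scomp (h := fun u : ℝ => u / b - s / b) s
      (by simpa using hderiv (w + (s / b) • c)) hshift
    refine (hcomp.congr_deriv (by simp)).congr_of_eventuallyEq (Eventually.of_forall fun u => ?_)
    simp only [Function.comp_apply]
    congr 1
    module
  rw [integral_id_mul_gaussianReal hline (fun s => hC _) (C' := ‖(b⁻¹ : ℂ)‖ * C') fun s => by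
    rw [norm_mul]
    gcongr
    exact hC' _]
  rw [integral_const_mul, ← mul_assoc, Real.coe_toNNReal b hb.le,
    mul_inv_cancel₀ (by exact_mod_cast hb.ne'), one_mul]

lemma integral_eval_mul_comp [Finite ι] (hx : HasGaussianLaw x P) (hmean : ∫ ω, x ω a ∂P = 0)
    (hcov : ∀ i, ∫ ω, x ω a * x ω i ∂P = c i) {F F' : (ι → ℝ) → ℂ} {C C' : ℝ}
    (hF : Continuous F) (hF' : Continuous F') (hC : ∀ y, ‖F y‖ ≤ C) (hC' : ∀ y, ‖F' y‖ ≤ C')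
    (hderiv : ∀ y, HasDerivAt (fun s : ℝ => F (y + s • c)) (F' y) 0) :
    ∫ ω, (x ω a : ℂ) * F (x ω) ∂P = ∫ ω, F' (x ω) ∂P := by
  have := hx.isProbabilityMeasure
  have hFint : Integrable (fun ω => (x ω a : ℂ) * F (x ω)) P :=
    (hx.eval a).integrable.ofReal.mul_bdd
      (hF.comp_aestronglyMeasurable hx.aemeasurable.aestronglyMeasurable)
      (ae_of_all _ fun ω => hC (x ω))
  have hF'int : Integrable (fun ω => F' (x ω)) P :=
    .of_bound (hF'.comp_aestronglyMeasurable hx.aemeasurable.aestronglyMeasurable) C'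
      (ae_of_all _ fun ω => hC' _)
  have hnonneg : 0 ≤ c a := by
    rw [← hcov a]
    exact integral_nonneg fun ω => mul_self_nonneg _
  rcases hnonneg.eq_or_lt' with hca | hca
  · obtain ⟨hxa, rfl⟩ := covariance_row_eq_zero
      ((hx.eval a).memLp_two.integrable_mul (hx.eval a).memLp_two) hcov hca
    have hF'0 (y : ι → ℝ) : F' y = 0 :=
      (hderiv y).unique (by simpa using hasDerivAt_const (0 : ℝ) (F y))
    simp only [hF'0, integral_zero]
    refine integral_eq_zero_of_ae ?_
    filter_upwards [hxa] with ω hω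
    simp [hω]
  · rw [integral_comp_eq_integral_regression (G := fun s y => (s : ℂ) * F y) hx hmean hcov hca.ne'
      (by fun_prop) hFint,
      integral_comp_eq_integral_regression (G := fun _ y => F' y) hx hmean hcov hca.ne'
      (by fun_prop) hF'int]
    simp only [integral_id_mul_comp_line hca hC hC' hderiv]

end GaussianIntegrationByParts

section Resolvent

open Matrix

variable {n : Type*} [Fintype n] [DecidableEq n]

/-- The inclusion of real matrices into complex matrices. -/
abbrev complexify : Matrix n n ℝ →ₐ[ℝ] Matrix n n ℂ := Complex.ofRealAm.mapMatrix

/-- The resolvent `(Y - z)⁻¹` of a real matrix at a complex point. It has the opposite sign of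
`resolvent`, so that its normalized trace is the Stieltjes transform of the empirical spectral
distribution. -/
def matResolvent (Y : Matrix n n ℝ) (z : ℂ) : Matrix n n ℂ := (complexify Y - z • 1)⁻¹

/-- The matrix `B` written in an orthonormal eigenbasis of the symmetric matrix `Y`. -/
abbrev eigenConj {Y : Matrix n n ℝ} (hY : Y.IsHermitian) : Matrix n n ℝ ≃⋆ₐ[ℝ] Matrix n n ℝ :=
  Unitary.conjStarAlgAut ℝ _ (star hY.eigenvectorUnitary)

lemma trace_complexify (A : Matrix n n ℝ) : (complexify A).trace = (A.trace : ℂ) := by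
  simp [Matrix.trace]

lemma ofReal_sub_ne_zero {z : ℂ} (hz : 0 < z.im) (l : ℝ) : (l : ℂ) - z ≠ 0 := fun h => by
  simpa [hz.ne'] using congrArg Complex.im h

lemma norm_inv_ofReal_sub_le {z : ℂ} (hz : 0 < z.im) (l : ℝ) :
    ‖((l : ℂ) - z)⁻¹‖ ≤ z.im⁻¹ := by
  rw [norm_inv]
  refine inv_anti₀ hz ?_
  simpa [abs_of_pos hz] using Complex.abs_im_le_norm ((l : ℂ) - z)

lemma trace_eigenConj {Y : Matrix n n ℝ} (hY : Y.IsHermitian) (B : Matrix n n ℝ) :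
    (eigenConj hY B).trace = B.trace := by
  rw [Unitary.conjStarAlgAut_star_apply, trace_mul_cycle,
    Unitary.mul_star_self_of_mem hY.eigenvectorUnitary.2, Matrix.one_mul]

lemma posSemidef_eigenConj {Y B : Matrix n n ℝ} (hY : Y.IsHermitian) (hB : B.PosSemidef) :
    (eigenConj hY B).PosSemidef := by
  rw [Unitary.conjStarAlgAut_star_apply]
  exact hB.conjTranspose_mul_mul_same _

lemma sum_sq_eigenConj {Y : Matrix n n ℝ} (hY : Y.IsHermitian) (B : Matrix n n ℝ) :
    ∑ i, ∑ j, eigenConj hY B i j ^ 2 = (B * Bᴴ).trace := by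
  rw [← trace_eigenConj hY, map_mul, ← star_eq_conjTranspose, map_star]
  simp only [trace, diag_apply, mul_apply, star_eq_conjTranspose, conjTranspose_apply,
    star_trivial, sq]

lemma complexify_sub_smul_one_mul_eq_one {Y : Matrix n n ℝ} (hY : Y.IsHermitian) {z : ℂ}
    (hz : 0 < z.im) :
    (complexify Y - z • 1) * (complexify (hY.eigenvectorUnitary : Matrix n n ℝ) *
      diagonal (fun j => ((hY.eigenvalues j : ℂ) - z)⁻¹) *
      complexify (star (hY.eigenvectorUnitary : Matrix n n ℝ))) = 1 := by
  set U := (hY.eigenvectorUnitary : Matrix n n ℝ)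
  have hUU : complexify U * complexify (star U) = 1 := by
    rw [← map_mul, Unitary.mul_star_self_of_mem hY.eigenvectorUnitary.2, map_one]
  have hYU : complexify Y * complexify U =
      complexify U * diagonal (fun j => (hY.eigenvalues j : ℂ)) := by
    have hspec : Y * U = U * diagonal hY.eigenvalues := by
      conv_lhs => rw [hY.spectral_theorem, Unitary.conjStarAlgAut_apply]
      rw [Matrix.mul_assoc, Unitary.star_mul_self_of_mem hY.eigenvectorUnitary.2, Matrix.mul_one]
      rfl
    rw [← map_mul, hspec, map_mul]
    congr 1
    exact diagonal_map Complex.ofReal_zero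
  rw [← Matrix.mul_assoc, ← Matrix.mul_assoc, Matrix.sub_mul, hYU]
  rw [show z • (1 : Matrix n n ℂ) * complexify U = complexify U * diagonal fun _ => z by
    rw [← smul_one_eq_diagonal, Matrix.smul_mul, Matrix.mul_smul, Matrix.one_mul, Matrix.mul_one]]
  rw [← Matrix.mul_sub, diagonal_sub, Matrix.mul_assoc (complexify U), diagonal_mul_diagonal]
  simp only [mul_inv_cancel₀ (ofReal_sub_ne_zero hz _), diagonal_one, Matrix.mul_one, hUU]

lemma matResolvent_eq {Y : Matrix n n ℝ} (hY : Y.IsHermitian) {z : ℂ} (hz : 0 < z.im) :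
    matResolvent Y z = complexify (hY.eigenvectorUnitary : Matrix n n ℝ) *
      diagonal (fun j => ((hY.eigenvalues j : ℂ) - z)⁻¹) *
      complexify (star (hY.eigenvectorUnitary : Matrix n n ℝ)) :=
  inv_eq_right_inv (complexify_sub_smul_one_mul_eq_one hY hz)

lemma isUnit_det_complexify_sub {Y : Matrix n n ℝ} (hY : Y.IsHermitian) {z : ℂ}
    (hz : 0 < z.im) : IsUnit (complexify Y - z • 1).det :=
  isUnit_det_of_right_inverse (complexify_sub_smul_one_mul_eq_one hY hz)

lemma complexify_mul_matResolvent {Y : Matrix n n ℝ} (hY : Y.IsHermitian) {z : ℂ}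
    (hz : 0 < z.im) : complexify Y * matResolvent Y z = 1 + z • matResolvent Y z := by
  have hinv : (complexify Y - z • 1) * matResolvent Y z = 1 :=
    mul_nonsing_inv _ (isUnit_det_complexify_sub hY hz)
  rw [← hinv, Matrix.sub_mul, Matrix.smul_mul, Matrix.one_mul, sub_add_cancel]

lemma transpose_matResolvent {Y : Matrix n n ℝ} (hY : Y.IsHermitian) (z : ℂ) :
    (matResolvent Y z)ᵀ = matResolvent Y z := by
  have hYt : (complexify Y)ᵀ = complexify Y := by
    conv_rhs => rw [← hY.eq]
    ext i j
    simp
  rw [matResolvent, transpose_nonsing_inv, transpose_sub, hYt, transpose_smul, transpose_one]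

lemma trace_complexify_mul_matResolvent {Y : Matrix n n ℝ} (hY : Y.IsHermitian) {z : ℂ}
    (hz : 0 < z.im) (B : Matrix n n ℝ) :
    (complexify B * matResolvent Y z).trace =
      ∑ j, (eigenConj hY B j j : ℂ) * ((hY.eigenvalues j : ℂ) - z)⁻¹ := by
  rw [matResolvent_eq hY hz, ← Matrix.mul_assoc, trace_mul_comm, ← Matrix.mul_assoc,
    ← Matrix.mul_assoc, ← map_mul, ← map_mul, Unitary.conjStarAlgAut_star_apply]
  simp only [trace, diag_apply, mul_diagonal, AlgHom.mapMatrix_apply, map_apply,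
    Complex.ofRealAm_coe]

lemma trace_matResolvent {Y : Matrix n n ℝ} (hY : Y.IsHermitian) {z : ℂ} (hz : 0 < z.im) :
    (matResolvent Y z).trace = ∑ j, ((hY.eigenvalues j : ℂ) - z)⁻¹ := by
  simpa [-Unitary.conjStarAlgAut_apply] using trace_complexify_mul_matResolvent hY hz 1

section Bounds

variable {Y B : Matrix n n ℝ} {z : ℂ}

lemma norm_trace_mul_matResolvent_le_sum (hY : Y.IsHermitian) (hz : 0 < z.im)
    (B : Matrix n n ℝ) :
    ‖(complexify B * matResolvent Y z).trace‖ ≤ z.im⁻¹ * ∑ j, |eigenConj hY B j j| := by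
  rw [trace_complexify_mul_matResolvent hY hz, Finset.mul_sum]
  refine (norm_sum_le _ _).trans (Finset.sum_le_sum fun j _ => ?_)
  rw [norm_mul, Complex.norm_real, Real.norm_eq_abs, mul_comm]
  exact mul_le_mul_of_nonneg_right (norm_inv_ofReal_sub_le hz _) (abs_nonneg _)

lemma norm_trace_mul_matResolvent_le (hY : Y.IsHermitian) (hz : 0 < z.im) (hB : B.PosSemidef) :
    ‖(complexify B * matResolvent Y z).trace‖ ≤ z.im⁻¹ * B.trace := by
  refine (norm_trace_mul_matResolvent_le_sum hY hz B).trans_eq ?_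
  rw [← trace_eigenConj hY B, trace]
  simp only [diag_apply, abs_of_nonneg (posSemidef_eigenConj hY hB).diag_nonneg]

lemma im_trace_mul_matResolvent_nonneg (hY : Y.IsHermitian) (hz : 0 < z.im)
    (hB : B.PosSemidef) : 0 ≤ (complexify B * matResolvent Y z).trace.im := by
  rw [trace_complexify_mul_matResolvent hY hz, Complex.im_sum]
  refine Finset.sum_nonneg fun j _ => ?_
  rw [Complex.im_ofReal_mul, Complex.inv_im]
  refine mul_nonneg (posSemidef_eigenConj hY hB).diag_nonneg
    (div_nonneg ?_ (Complex.normSq_nonneg _))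
  simp [hz.le]

lemma sq_norm_trace_mul_matResolvent_le (hY : Y.IsHermitian) (hz : 0 < z.im)
    (B : Matrix n n ℝ) :
    ‖(complexify B * matResolvent Y z).trace‖ ^ 2 ≤
      z.im⁻¹ ^ 2 * (Fintype.card n * (B * Bᴴ).trace) := by
  calc ‖(complexify B * matResolvent Y z).trace‖ ^ 2
      ≤ (z.im⁻¹ * ∑ j, |eigenConj hY B j j|) ^ 2 := by
        gcongr
        exact norm_trace_mul_matResolvent_le_sum hY hz B
    _ ≤ z.im⁻¹ ^ 2 * (Fintype.card n * ∑ j, eigenConj hY B j j ^ 2) := by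
        rw [mul_pow]
        gcongr
        simpa only [sq_abs, Finset.card_univ] using
          sq_sum_le_card_mul_sum_sq (s := Finset.univ) (f := fun j => |eigenConj hY B j j|)
    _ ≤ z.im⁻¹ ^ 2 * (Fintype.card n * (B * Bᴴ).trace) := by
        rw [← sum_sq_eigenConj hY B]
        gcongr with i
        exact Finset.single_le_sum (f := fun j => eigenConj hY B i j ^ 2)
          (fun j _ => sq_nonneg _) (Finset.mem_univ i)

lemma norm_matResolvent_apply_le (hY : Y.IsHermitian) (hz : 0 < z.im) (a b : n) :
    ‖matResolvent Y z a b‖ ≤ z.im⁻¹ * √(Fintype.card n) := by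
  have htrace := sq_norm_trace_mul_matResolvent_le hY hz (single b a (1 : ℝ))
  have hsingle : complexify (single b a (1 : ℝ)) = single b a (1 : ℂ) := by
    ext i j
    simp [single_apply, apply_ite]
  rw [hsingle, trace_single_mul, one_smul] at htrace
  simp only [conjTranspose_single, star_one, single_mul_single_same, trace_single_eq_same,
    mul_one] at htrace
  refine abs_le_of_sq_le_sq' ?_ (by positivity) |>.2
  rwa [mul_pow, Real.sq_sqrt (Nat.cast_nonneg _)]

lemma norm_trace_sq_mul_matResolvent_le (hY : Y.IsHermitian) (hz : 0 < z.im)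
    (hB : B.IsHermitian) :
    ‖(complexify B * matResolvent Y z * (complexify B * matResolvent Y z)).trace‖ ≤
      z.im⁻¹ ^ 2 * (B * B).trace := by
  set A := eigenConj hY B with hA
  let g : n → ℂ := fun j => ((hY.eigenvalues j : ℂ) - z)⁻¹
  have htrace : (complexify B * matResolvent Y z * (complexify B * matResolvent Y z)).trace =
      (complexify A * diagonal g * (complexify A * diagonal g)).trace := by
    rw [hA, Unitary.conjStarAlgAut_star_apply, matResolvent_eq hY hz]
    simp only [map_mul, ← Matrix.mul_assoc]
    rw [trace_mul_comm]
    simp only [← Matrix.mul_assoc, g]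
  have hAsymm (i j : n) : A j i = A i j := by
    have : star A = A := by rw [hA, ← map_star, star_eq_conjTranspose, hB.eq]
    simpa using congrFun (congrFun this i) j
  have hsq : (B * B).trace = ∑ i, ∑ j, A i j ^ 2 := by
    rw [hA, sum_sq_eigenConj, hB.eq]
  rw [htrace, hsq]
  simp only [trace, diag_apply, mul_apply (M := complexify A * diagonal g), mul_diagonal,
    Finset.mul_sum]
  refine norm_sum_le_of_le _ fun i _ => norm_sum_le_of_le _ fun j _ => ?_
  have hg : ‖g j‖ * ‖g i‖ ≤ z.im⁻¹ ^ 2 := by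
    rw [sq]
    exact mul_le_mul (norm_inv_ofReal_sub_le hz _) (norm_inv_ofReal_sub_le hz _) (norm_nonneg _)
      (by positivity)
  calc ‖complexify A i j * g j * (complexify A j i * g i)‖
      = ‖g j‖ * ‖g i‖ * A i j ^ 2 := by
        simp only [AlgHom.mapMatrix_apply, map_apply, Complex.ofRealAm_coe, norm_mul,
          Complex.norm_real, hAsymm i j, Real.norm_eq_abs, ← sq_abs (A i j)]
        ring
    _ ≤ z.im⁻¹ ^ 2 * A i j ^ 2 := by gcongr

end Bounds

section Calculus

open scoped Matrix.Norms.L2Operator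

lemma continuous_matResolvent {T : Type*} [TopologicalSpace T] {Y : T → Matrix n n ℝ}
    (hY : ∀ t, (Y t).IsHermitian) (hc : Continuous Y) {z : ℂ} (hz : 0 < z.im) :
    Continuous fun t => matResolvent (Y t) z := by
  have hM : Continuous fun t => complexify (Y t) - z • 1 :=
    (hc.matrix_map Complex.continuous_ofReal).sub continuous_const
  simp only [matResolvent, nonsing_inv_eq_ringInverse]
  refine continuous_iff_continuousAt.2 fun t => ?_
  obtain ⟨u, hu⟩ := (isUnit_iff_isUnit_det _).2 (isUnit_det_complexify_sub (hY t) hz)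
  refine ContinuousAt.comp (g := Ring.inverse) (f := fun t => complexify (Y t) - z • 1) ?_
    hM.continuousAt
  rw [← hu]
  exact NormedRing.inverse_continuousAt u

lemma hasDerivAt_matResolvent {Y H : Matrix n n ℝ} (hY : Y.IsHermitian)
    {z : ℂ} (hz : 0 < z.im) (a b : n) :
    HasDerivAt (fun s : ℝ => matResolvent (Y + s • H) z a b)
      (-(matResolvent Y z * complexify H * matResolvent Y z) a b) 0 := by
  obtain ⟨u, hu⟩ := (isUnit_iff_isUnit_det _).2 (isUnit_det_complexify_sub hY hz)
  have hline : HasDerivAt (fun s : ℝ => complexify (Y + s • H) - z • 1) (complexify H) 0 := by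
    simp only [map_add, map_smul]
    simpa using (((hasDerivAt_id (0 : ℝ)).smul_const (complexify H)).const_add
      (complexify Y)).sub_const (z • 1)
  have hinv : HasFDerivAt (𝕜 := ℝ) Ring.inverse
      (-ContinuousLinearMap.mulLeftRight ℝ _ (↑u⁻¹) (↑u⁻¹))
      (complexify (Y + (0 : ℝ) • H) - z • 1) := by
    rw [zero_smul, add_zero, ← hu]
    exact hasFDerivAt_ringInverse u
  have hR : (↑u⁻¹ : Matrix n n ℂ) = matResolvent Y z := by
    rw [matResolvent, ← hu, nonsing_inv_eq_ringInverse, Ring.inverse_unit]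
  have hcomp := hinv.comp_hasDerivAt (0 : ℝ) hline
  have hentry := ((entryLinearMap ℝ ℂ a b).toContinuousLinearMap.hasFDerivAt).comp_hasDerivAt
    (0 : ℝ) hcomp
  simp only [matResolvent, nonsing_inv_eq_ringInverse] at *
  simpa [Function.comp_def, hR] using hentry

end Calculus

end Resolvent

section KroneckerGaussian

open Matrix

variable {n : Type*}

/-- The symmetrization `v + vᵀ` of a family `v` indexed by pairs. -/
def symMat (v : n × n → ℝ) : Matrix n n ℝ := of (Function.curry v) + (of (Function.curry v))ᵀ

/-- A centered Gaussian random matrix whose entries, as a family indexed by pairs, have covariance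
`E[x (i, j) * x (k, l)] = v * K i k * K j l`. -/
structure IsKroneckerGaussian {Ω : Type*} [MeasurableSpace Ω] [Fintype n] (P : Measure Ω)
    (K : Matrix n n ℝ) (v : ℝ) (x : Ω → n × n → ℝ) : Prop where
  hasGaussianLaw : HasGaussianLaw x P
  mean (p : n × n) : ∫ ω, x ω p ∂P = 0
  cov (p q : n × n) : ∫ ω, x ω p * x ω q ∂P = v * (K p.1 q.1 * K p.2 q.2)

lemma symMat_apply (v : n × n → ℝ) (i j : n) : symMat v i j = v (i, j) + v (j, i) := rfl

lemma isHermitian_symMat (v : n × n → ℝ) : (symMat v).IsHermitian :=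
  isHermitian_add_transpose_self _

lemma symMat_add_smul (v w : n × n → ℝ) (s : ℝ) :
    symMat (v + s • w) = symMat v + s • symMat w := by
  ext i j
  simp only [symMat_apply, Matrix.add_apply, Matrix.smul_apply, Pi.add_apply, Pi.smul_apply,
    smul_eq_mul]
  ring

lemma continuous_symMat : Continuous (symMat : (n × n → ℝ) → Matrix n n ℝ) :=
  continuous_matrix fun i j => by
    simp only [symMat_apply]
    fun_prop

variable [Fintype n]

lemma trace_mul_symMat_mul_symMat (A : Matrix n n ℝ) (y : n × n → ℝ) :
    (A * (symMat y * symMat y)).trace = ∑ i, ∑ k, ∑ j, A i k * (symMat y k j * symMat y j i) := by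
  simp only [trace, diag_apply, mul_apply, Finset.mul_sum]

section SecondMoments

variable {Ω : Type*} [MeasurableSpace Ω] {P : Measure Ω} {K : Matrix n n ℝ} {v : ℝ}
  {x : Ω → n × n → ℝ}

namespace IsKroneckerGaussian

lemma memLp_two (hx : IsKroneckerGaussian P K v x) (p : n × n) : MemLp (fun ω => x ω p) 2 P :=
  (hx.hasGaussianLaw.eval p).memLp_two

lemma integral_symMat_apply_mul_symMat_apply (hx : IsKroneckerGaussian P K v x)
    (i j k l : n) : ∫ ω, symMat (x ω) i j * symMat (x ω) k l ∂P =
      2 * v * (K i k * K j l + K i l * K j k) := by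
  have hint (p q : n × n) : Integrable (fun ω => x ω p * x ω q) P :=
    (hx.memLp_two p).integrable_mul (hx.memLp_two q)
  simp only [symMat_apply, add_mul, mul_add]
  rw [integral_add (by fun_prop) (by fun_prop), integral_add (hint _ _) (hint _ _),
    integral_add (hint _ _) (hint _ _)]
  simp only [hx.cov]
  ring

lemma integrable_symMat_apply_mul_symMat_apply (hx : IsKroneckerGaussian P K v x) (i j k l : n) :
    Integrable (fun ω => symMat (x ω) i j * symMat (x ω) k l) P :=
  ((hx.memLp_two _).add (hx.memLp_two _)).integrable_mul ((hx.memLp_two _).add (hx.memLp_two _))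

lemma integrable_trace_mul_symMat_mul_symMat (hx : IsKroneckerGaussian P K v x)
    (A : Matrix n n ℝ) :
    Integrable (fun ω => (A * (symMat (x ω) * symMat (x ω))).trace) P := by
  simp only [trace_mul_symMat_mul_symMat]
  exact integrable_finsetSum _ fun i _ => integrable_finsetSum _ fun k _ =>
    integrable_finsetSum _ fun j _ =>
      (hx.integrable_symMat_apply_mul_symMat_apply k j j i).const_mul _

theorem integral_trace_mul_symMat_mul_symMat (hx : IsKroneckerGaussian P K v x)
    (A : Matrix n n ℝ) : ∫ ω, (A * (symMat (x ω) * symMat (x ω))).trace ∂P =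
      2 * v * (K.trace * (A * K).trace + (A * (K * K)).trace) := by
  have hint (i k j : n) : Integrable (fun ω => A i k * (symMat (x ω) k j * symMat (x ω) j i)) P :=
    (hx.integrable_symMat_apply_mul_symMat_apply k j j i).const_mul _
  calc ∫ ω, (A * (symMat (x ω) * symMat (x ω))).trace ∂P
      = ∑ i, ∑ k, ∑ j, A i k * (2 * v * (K k j * K j i + K k i * K j j)) := by
        simp only [trace_mul_symMat_mul_symMat]
        rw [integral_finsetSum _ fun i _ => by fun_prop]
        congr! 1 with i
        rw [integral_finsetSum _ fun k _ => by fun_prop]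
        congr! 1 with k
        rw [integral_finsetSum _ fun j _ => hint i k j]
        simp only [integral_const_mul, hx.integral_symMat_apply_mul_symMat_apply]
    _ = ∑ i, ∑ k, (2 * v * (K.trace * (A i k * K k i)) + 2 * v * (A i k * (K * K) k i)) := by
        simp only [trace, diag_apply, Matrix.mul_apply (M := K) (N := K), Finset.mul_sum,
          Finset.sum_mul, ← Finset.sum_add_distrib]
        congr! 3
        ring
    _ = 2 * v * (K.trace * (A * K).trace + (A * (K * K)).trace) := by
        simp only [Finset.sum_add_distrib, ← Finset.mul_sum, trace, diag_apply,
          Matrix.mul_apply (M := A), mul_add]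

end IsKroneckerGaussian

end SecondMoments

variable [DecidableEq n]

lemma trace_complexify_symMat_mul (v : n × n → ℝ) {R : Matrix n n ℂ} (hR : Rᵀ = R) :
    (complexify (symMat v) * R).trace = 2 * ∑ p : n × n, (v p : ℂ) * R p.1 p.2 := by
  have hsym (i j : n) : R j i = R i j := congrFun (congrFun hR i) j
  simp only [trace, diag_apply, mul_apply, AlgHom.mapMatrix_apply, map_apply,
    Complex.ofRealAm_coe, symMat_apply, Complex.ofReal_add, add_mul, Finset.sum_add_distrib,
    two_mul, Fintype.sum_prod_type, hsym]
  congr 1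
  rw [Finset.sum_comm]
  simp only [hsym]

lemma mul_symMat_mul_apply (K : Matrix n n ℝ) {R : Matrix n n ℂ} (hR : Rᵀ = R) (v : ℝ)
    (i j : n) :
    (R * complexify (symMat fun q => v * (K i q.1 * K j q.2)) * R) i j =
      v * ((complexify K * R) i i * (complexify K * R) j j +
        (complexify K * R) i j * (complexify K * R) j i) := by
  have hsym (k : n) : R i k = R k i := congrFun (congrFun hR k) i
  have hexpand (M : Matrix n n ℂ) : (R * M * R) i j = ∑ k, ∑ l, R i k * M k l * R l j := by
    simp only [mul_apply, Finset.sum_mul]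
    exact Finset.sum_comm
  rw [hexpand, mul_comm ((complexify K * R) i j)]
  simp only [mul_apply, Finset.sum_mul_sum, ← Finset.sum_add_distrib]
  simp only [Finset.mul_sum]
  refine Finset.sum_congr rfl fun k _ => Finset.sum_congr rfl fun l _ => ?_
  simp only [AlgHom.mapMatrix_apply, map_apply, Complex.ofRealAm_coe, symMat_apply, hsym k]
  push_cast
  ring

lemma sum_mul_symMat_mul_apply (K : Matrix n n ℝ) {R : Matrix n n ℂ} (hR : Rᵀ = R) (v : ℝ) :
    ∑ p : n × n, (R * complexify (symMat fun q => v * (K p.1 q.1 * K p.2 q.2)) * R) p.1 p.2 =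
      v * ((complexify K * R).trace ^ 2 + (complexify K * R * (complexify K * R)).trace) := by
  simp only [mul_symMat_mul_apply K hR, ← Finset.mul_sum, Fintype.sum_prod_type,
    Finset.sum_add_distrib]
  rw [sq, trace, trace, Finset.sum_mul_sum]
  simp only [diag_apply, mul_apply (M := complexify K * R), Finset.mul_sum]

variable {Ω : Type*} [MeasurableSpace Ω] {P : Measure Ω} {K : Matrix n n ℝ} {v : ℝ}
  {x : Ω → n × n → ℝ} {z : ℂ}

lemma continuous_matResolvent_symMat_apply (hz : 0 < z.im) (k l : n) :
    Continuous fun y : n × n → ℝ => matResolvent (symMat y) z k l :=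
  (continuous_matResolvent isHermitian_symMat continuous_symMat hz).matrix_elem k l

lemma continuous_matResolvent_mul_mul_apply (hz : 0 < z.im) (H : Matrix n n ℂ) (k l : n) :
    Continuous fun y : n × n → ℝ =>
      (matResolvent (symMat y) z * H * matResolvent (symMat y) z) k l := by
  have hR := continuous_matResolvent (n := n) isHermitian_symMat continuous_symMat hz
  exact ((hR.matrix_mul continuous_const).matrix_mul hR).matrix_elem k l

lemma exists_norm_matResolvent_mul_mul_apply_le (hz : 0 < z.im) (H : Matrix n n ℂ) (k l : n) :
    ∃ C, ∀ Y : Matrix n n ℝ, Y.IsHermitian →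
      ‖(matResolvent Y z * H * matResolvent Y z) k l‖ ≤ C := by
  set C := z.im⁻¹ * √(Fintype.card n)
  refine ⟨∑ j, (∑ i, C * ‖H i j‖) * C, fun Y hY => ?_⟩
  simp only [mul_apply]
  refine norm_sum_le_of_le _ fun j _ => ?_
  rw [norm_mul]
  gcongr
  · exact norm_sum_le_of_le _ fun i _ => by
      rw [norm_mul]
      gcongr
      exact norm_matResolvent_apply_le hY hz k i
  · exact norm_matResolvent_apply_le hY hz j l

namespace IsKroneckerGaussian

lemma integral_mul_matResolvent_apply (hx : IsKroneckerGaussian P K v x) (hz : 0 < z.im)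
    (p : n × n) (k l : n) :
    ∫ ω, (x ω p : ℂ) * matResolvent (symMat (x ω)) z k l ∂P =
      ∫ ω, -(matResolvent (symMat (x ω)) z *
        complexify (symMat fun q => v * (K p.1 q.1 * K p.2 q.2)) *
        matResolvent (symMat (x ω)) z) k l ∂P := by
  obtain ⟨C, hC⟩ := exists_norm_matResolvent_mul_mul_apply_le hz
    (complexify (symMat fun q => v * (K p.1 q.1 * K p.2 q.2))) k l
  refine integral_eval_mul_comp (F := fun y => matResolvent (symMat y) z k l)
    (F' := fun y => -(matResolvent (symMat y) z *
      complexify (symMat fun q => v * (K p.1 q.1 * K p.2 q.2)) *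
      matResolvent (symMat y) z) k l)
    hx.hasGaussianLaw (hx.mean p) (hx.cov p) (continuous_matResolvent_symMat_apply hz k l)
    (continuous_matResolvent_mul_mul_apply hz _ k l).neg
    (fun y => norm_matResolvent_apply_le (isHermitian_symMat y) hz k l)
    (fun y => (norm_neg _).trans_le (hC _ (isHermitian_symMat y))) fun y => ?_
  simp only [symMat_add_smul]
  exact hasDerivAt_matResolvent (isHermitian_symMat y) hz k l

lemma integrable_mul_matResolvent_apply (hx : IsKroneckerGaussian P K v x) (hz : 0 < z.im)
    (p : n × n) (k l : n) :
    Integrable (fun ω => (x ω p : ℂ) * matResolvent (symMat (x ω)) z k l) P := by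
  have := hx.hasGaussianLaw.isProbabilityMeasure
  exact ((hx.memLp_two p).integrable one_le_two).ofReal.mul_bdd (c := z.im⁻¹ * √(Fintype.card n))
    ((continuous_matResolvent_symMat_apply hz k l).comp_aestronglyMeasurable
      hx.hasGaussianLaw.aemeasurable.aestronglyMeasurable)
    (ae_of_all _ fun ω => norm_matResolvent_apply_le (isHermitian_symMat _) hz k l)

lemma integrable_matResolvent_mul_mul_apply (hx : IsKroneckerGaussian P K v x) (hz : 0 < z.im)
    (H : Matrix n n ℂ) (k l : n) :
    Integrable (fun ω =>
      (matResolvent (symMat (x ω)) z * H * matResolvent (symMat (x ω)) z) k l) P := by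
  have := hx.hasGaussianLaw.isProbabilityMeasure
  obtain ⟨C, hC⟩ := exists_norm_matResolvent_mul_mul_apply_le hz H k l
  exact .of_bound ((continuous_matResolvent_mul_mul_apply hz H k l).comp_aestronglyMeasurable
    hx.hasGaussianLaw.aemeasurable.aestronglyMeasurable) C
    (ae_of_all _ fun ω => hC _ (isHermitian_symMat _))

theorem integral_trace_symMat_mul_matResolvent (hx : IsKroneckerGaussian P K v x) (hz : 0 < z.im) :
    ∫ ω, (complexify (symMat (x ω)) * matResolvent (symMat (x ω)) z).trace ∂P =
      -2 * v * ∫ ω, ((complexify K * matResolvent (symMat (x ω)) z).trace ^ 2 +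
        (complexify K * matResolvent (symMat (x ω)) z *
          (complexify K * matResolvent (symMat (x ω)) z)).trace) ∂P := by
  have hR (ω : Ω) := transpose_matResolvent (isHermitian_symMat (x ω)) z
  calc ∫ ω, (complexify (symMat (x ω)) * matResolvent (symMat (x ω)) z).trace ∂P
      = 2 * ∑ p : n × n, ∫ ω, (x ω p : ℂ) * matResolvent (symMat (x ω)) z p.1 p.2 ∂P := by
        simp only [trace_complexify_symMat_mul _ (hR _)]
        rw [integral_const_mul, integral_finsetSum _ fun p _ =>
          hx.integrable_mul_matResolvent_apply hz p p.1 p.2]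
    _ = -2 * ∫ ω, ∑ p : n × n, (matResolvent (symMat (x ω)) z *
          complexify (symMat fun q => v * (K p.1 q.1 * K p.2 q.2)) *
          matResolvent (symMat (x ω)) z) p.1 p.2 ∂P := by
        rw [integral_finsetSum _ fun p _ =>
          hx.integrable_matResolvent_mul_mul_apply hz _ p.1 p.2]
        simp only [hx.integral_mul_matResolvent_apply hz, integral_neg, Finset.sum_neg_distrib,
          mul_neg, neg_mul]
    _ = _ := by
        simp only [sum_mul_symMat_mul_apply K (hR _)]
        rw [integral_const_mul, mul_assoc]

end IsKroneckerGaussian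

end KroneckerGaussian

section PosSemidef

open Matrix

variable {n : Type*} [Fintype n]

open scoped MatrixOrder in
lemma posSemidef_mul_of_commute {A B : Matrix n n ℝ} (hA : A.PosSemidef) (hB : B.PosSemidef)
    (hAB : Commute A B) : (A * B).PosSemidef := by
  classical exact nonneg_iff_posSemidef.1 (hAB.mul_nonneg hA.nonneg hB.nonneg)

variable [DecidableEq n]

lemma commute_smul_one_sub (K : Matrix n n ℝ) (M : ℝ) : Commute K (M • 1 - K) :=
  ((Commute.one_right K).smul_right M).sub_right (Commute.refl K)

section Pinched

variable {K : Matrix n n ℝ} {M : ℝ} (hK : K.PosSemidef) (hKM : (M • 1 - K).PosSemidef)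
include hK hKM

lemma posSemidef_mul_smul_one_sub : (K * (M • 1 - K)).PosSemidef :=
  posSemidef_mul_of_commute hK hKM (commute_smul_one_sub K M)

lemma trace_mul_mul_smul_one_sub_le :
    (K * (K * (M • 1 - K))).trace ≤ M * (K * (M • 1 - K)).trace := by
  set D := K * (M • 1 - K)
  have hcomm : Commute (M • 1 - K) D :=
    (commute_smul_one_sub K M).symm.mul_right (Commute.refl _)
  have hnonneg := (posSemidef_mul_of_commute hKM (posSemidef_mul_smul_one_sub hK hKM)
    hcomm).trace_nonneg
  rw [Matrix.sub_mul, trace_sub, smul_mul, Matrix.one_mul, trace_smul, smul_eq_mul] at hnonneg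
  linarith

lemma trace_sq_smul_one_sub_mul_le :
    ((M • 1 - K) * (M • 1 - K) * K).trace ≤ M * (K * (M • 1 - K)).trace := by
  have hcomm := commute_smul_one_sub K M
  have hnonneg := (posSemidef_mul_of_commute hK (posSemidef_mul_smul_one_sub hK hKM)
    ((Commute.refl K).mul_right hcomm)).trace_nonneg
  calc ((M • 1 - K) * (M • 1 - K) * K).trace
      = ((M • 1 - K) * (K * (M • 1 - K))).trace := by rw [Matrix.mul_assoc, hcomm.eq]
    _ = M * (K * (M • 1 - K)).trace - (K * (K * (M • 1 - K))).trace := by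
        rw [Matrix.sub_mul, trace_sub, smul_mul, Matrix.one_mul, trace_smul, smul_eq_mul]
    _ ≤ M * (K * (M • 1 - K)).trace := sub_le_self _ hnonneg

lemma trace_sq_smul_one_sub_mul_sq_le (hM : 0 ≤ M) :
    ((M • 1 - K) * (M • 1 - K) * (K * K)).trace ≤ M ^ 2 * (K * (M • 1 - K)).trace := by
  set Q := M • 1 - K with hQ
  have hcomm : Commute K Q := commute_smul_one_sub K M
  have hD : (K * Q).PosSemidef := posSemidef_mul_smul_one_sub hK hKM
  have hnonneg := (posSemidef_mul_of_commute (posSemidef_mul_of_commute hK hK (Commute.refl K)) hD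
    (((Commute.refl K).mul_right hcomm).mul_left ((Commute.refl K).mul_right hcomm))).trace_nonneg
  calc (Q * Q * (K * K)).trace
      = (Q * (K * (K * Q))).trace := by
        rw [Matrix.mul_assoc, trace_mul_comm, Matrix.mul_assoc, Matrix.mul_assoc]
    _ = M * (K * (K * Q)).trace - (K * K * (K * Q)).trace := by
        nth_rw 1 [hQ]
        rw [Matrix.sub_mul, trace_sub, smul_mul, Matrix.one_mul, trace_smul, smul_eq_mul,
          Matrix.mul_assoc K K]
    _ ≤ M * (M * (K * Q).trace) := (sub_le_self _ hnonneg).trans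
        (mul_le_mul_of_nonneg_left (trace_mul_mul_smul_one_sub_le hK hKM) hM)
    _ = M ^ 2 * (K * Q).trace := by ring

end Pinched

theorem IsKroneckerGaussian.integral_trace_sq_smul_one_sub_mul_le {Ω : Type*} [MeasurableSpace Ω]
    {P : Measure Ω} {K : Matrix n n ℝ} {v M : ℝ} {x : Ω → n × n → ℝ}
    (hx : IsKroneckerGaussian P K v x) (hv : 0 ≤ v) (hM : 0 ≤ M) (hK : K.PosSemidef)
    (hKM : (M • 1 - K).PosSemidef) :
    ∫ ω, ((M • 1 - K) * (M • 1 - K) * (symMat (x ω) * symMat (x ω))).trace ∂P ≤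
      2 * v * (M * K.trace + M ^ 2) * (K * (M • 1 - K)).trace := by
  rw [hx.integral_trace_mul_symMat_mul_symMat]
  calc 2 * v * (K.trace * ((M • 1 - K) * (M • 1 - K) * K).trace +
        ((M • 1 - K) * (M • 1 - K) * (K * K)).trace)
      ≤ 2 * v * (K.trace * (M * (K * (M • 1 - K)).trace) +
        M ^ 2 * (K * (M • 1 - K)).trace) := by
        gcongr
        · exact hK.trace_nonneg
        · exact trace_sq_smul_one_sub_mul_le hK hKM
        · exact trace_sq_smul_one_sub_mul_sq_le hK hKM hM
    _ = 2 * v * (M * K.trace + M ^ 2) * (K * (M • 1 - K)).trace := by ring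

end PosSemidef

section Toeplitz

open Matrix

/-- The `N × N` Toeplitz matrix with entries `k (i - j)`. -/
def toeplitz (k : ℤ → ℝ) (N : ℕ) : Matrix (Fin N) (Fin N) ℝ := of fun i j => k (i - j)

/-- The Fourier cosine coefficients of the indicator function of `[a, b]`. -/
def cosCoeff (a b : ℝ) (u : ℤ) : ℝ := ∫ x in a..b, cos (u * x)

lemma toeplitz_apply (k : ℤ → ℝ) (N : ℕ) (i j : Fin N) : toeplitz k N i j = k (i - j) := rfl

lemma toeplitz_add (k l : ℤ → ℝ) (N : ℕ) :
    toeplitz (k + l) N = toeplitz k N + toeplitz l N := rfl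

lemma trace_toeplitz (k : ℤ → ℝ) (N : ℕ) : (toeplitz k N).trace = N * k 0 := by
  simp [trace, toeplitz_apply]

lemma isHermitian_toeplitz {k : ℤ → ℝ} (hk : k.Even) (N : ℕ) : (toeplitz k N).IsHermitian := by
  ext i j
  simp [toeplitz_apply, ← hk (j - i)]

lemma cosCoeff_even (a b : ℝ) : (cosCoeff a b).Even := fun u => by
  simp [cosCoeff]

lemma cosCoeff_add_adjacent (a b c : ℝ) : cosCoeff a b + cosCoeff b c = cosCoeff a c := by
  ext u
  exact intervalIntegral.integral_add_adjacent_intervals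
    (Continuous.intervalIntegrable (by fun_prop) _ _)
    (Continuous.intervalIntegrable (by fun_prop) _ _)

lemma cosCoeff_zero (a b : ℝ) : cosCoeff a b 0 = b - a := by
  simp [cosCoeff]

lemma cosCoeff_neg_self {u : ℤ} (hu : u ≠ 0) (α : ℝ) :
    cosCoeff (-α) α u = 2 * sin (u * α) / u := by
  rw [cosCoeff, intervalIntegral.integral_comp_mul_left _ (by exact_mod_cast hu), integral_cos,
    mul_neg, sin_neg, smul_eq_mul]
  field_simp
  ring

lemma posSemidef_toeplitz_cosCoeff {a b : ℝ} (hab : a ≤ b) (N : ℕ) :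
    (toeplitz (cosCoeff a b) N).PosSemidef := by
  refine .of_dotProduct_mulVec_nonneg (isHermitian_toeplitz (cosCoeff_even a b) N) fun v => ?_
  have hsquares (x : ℝ) : ∑ i : Fin N, ∑ j : Fin N, v i * (cos (((i - j : ℤ) : ℝ) * x) * v j) =
      (∑ i : Fin N, v i * cos (i * x)) ^ 2 + (∑ i : Fin N, v i * sin (i * x)) ^ 2 := by
    simp only [sq, Finset.sum_mul_sum, ← Finset.sum_add_distrib]
    congr! 2
    push_cast
    rw [sub_mul, cos_sub]
    ring
  have hform : star v ⬝ᵥ (toeplitz (cosCoeff a b) N *ᵥ v) =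
      ∫ x in a..b, ∑ i : Fin N, ∑ j : Fin N, v i * (cos (((i - j : ℤ) : ℝ) * x) * v j) := by
    rw [intervalIntegral.integral_finsetSum fun i _ =>
      Continuous.intervalIntegrable (by fun_prop) _ _]
    simp only [dotProduct, mulVec, Finset.mul_sum, star_trivial, toeplitz_apply, cosCoeff]
    congr! 1 with i
    rw [intervalIntegral.integral_finsetSum fun j _ =>
      Continuous.intervalIntegrable (by fun_prop) _ _]
    simp only [intervalIntegral.integral_const_mul, intervalIntegral.integral_mul_const]
  rw [hform]
  refine intervalIntegral.integral_nonneg hab fun x _ => ?_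
  rw [hsquares]
  positivity

lemma toeplitz_cosCoeff_neg_pi_pi (N : ℕ) : toeplitz (cosCoeff (-π) π) N = (2 * π) • 1 := by
  ext i j
  rw [toeplitz_apply, Matrix.smul_apply, one_apply]
  split_ifs with hij
  · rw [hij, sub_self, cosCoeff_zero]
    simp [two_mul]
  · have hu : ((i : ℕ) : ℤ) - (j : ℕ) ≠ 0 := by
      rw [sub_ne_zero]
      exact_mod_cast Fin.val_ne_of_ne hij
    rw [cosCoeff_neg_self hu, sin_int_mul_pi]
    simp

lemma posSemidef_two_pi_smul_one_sub_toeplitz {α : ℝ} (hα : α ≤ π) (N : ℕ) :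
    ((2 * π) • 1 - toeplitz (cosCoeff (-α) α) N).PosSemidef := by
  have hsplit : (2 * π) • 1 - toeplitz (cosCoeff (-α) α) N =
      toeplitz (cosCoeff (-π) (-α)) N + toeplitz (cosCoeff α π) N := by
    rw [← toeplitz_cosCoeff_neg_pi_pi, ← cosCoeff_add_adjacent _ (-α),
      ← cosCoeff_add_adjacent (-α) α, toeplitz_add, toeplitz_add]
    abel
  rw [hsplit]
  exact (posSemidef_toeplitz_cosCoeff (neg_le_neg hα) N).add (posSemidef_toeplitz_cosCoeff hα N)

section SumOfSquares

variable {k : ℤ → ℝ} (hk : k.Even)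
include hk

lemma trace_toeplitz_mul_toeplitz (N : ℕ) :
    (toeplitz k N * toeplitz k N).trace = ∑ i, ∑ j, toeplitz k N i j ^ 2 := by
  simp only [trace, diag_apply, Matrix.mul_apply, sq]
  congr! 2 with i _ j
  rw [← (isHermitian_toeplitz hk N).apply j i, star_trivial]

lemma sum_sq_toeplitz_succ (N : ℕ) :
    ∑ i, ∑ j, toeplitz k (N + 1) i j ^ 2 =
      ∑ i, ∑ j, toeplitz k N i j ^ 2 + (k 0 ^ 2 + 2 * ∑ m ∈ Finset.range N, k (m + 1 : ℕ) ^ 2) := by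
  have hrow : ∑ j : Fin N, k ((N : ℤ) - j) ^ 2 = ∑ m ∈ Finset.range N, k (m + 1 : ℕ) ^ 2 := by
    rw [← Finset.sum_range_reflect, Finset.sum_range]
    congr! 3 with j
    omega
  have hcol : ∑ j : Fin N, k ((j : ℤ) - N) ^ 2 = ∑ m ∈ Finset.range N, k (m + 1 : ℕ) ^ 2 := by
    simp only [← hrow, ← hk (_ - (N : ℤ)), neg_sub]
  simp only [Fin.sum_univ_castSucc, Finset.sum_add_distrib, toeplitz_apply, Fin.val_castSucc,
    Fin.val_last, hrow, hcol, sub_self]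
  ring

lemma sum_sq_toeplitz (N : ℕ) :
    ∑ i, ∑ j, toeplitz k N i j ^ 2 =
      ∑ m ∈ Finset.range N, (k 0 ^ 2 + 2 * ∑ l ∈ Finset.range m, k (l + 1 : ℕ) ^ 2) := by
  induction N with
  | zero => simp
  | succ N ih => rw [sum_sq_toeplitz_succ hk, ih, Finset.sum_range_succ]

lemma tendsto_inv_mul_trace_toeplitz_mul_toeplitz {S : ℝ}
    (hS : HasSum (fun m : ℕ => k (m + 1 : ℕ) ^ 2) S) :
    Tendsto (fun N : ℕ => (N : ℝ)⁻¹ * (toeplitz k N * toeplitz k N).trace) atTop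
      (nhds (k 0 ^ 2 + 2 * S)) := by
  simp only [trace_toeplitz_mul_toeplitz hk, sum_sq_toeplitz hk]
  exact ((hS.tendsto_sum_nat.const_mul 2).const_add _).cesaro

end SumOfSquares

lemma hasSum_sq_cosCoeff_neg_self {α : ℝ} (hα₀ : 0 ≤ α) (hα₁ : α ≤ π) :
    HasSum (fun m : ℕ => cosCoeff (-α) α (m + 1 : ℕ) ^ 2) (2 * α * (π - α)) := by
  have hx : α / π ∈ Set.Icc (0 : ℝ) 1 := ⟨by positivity, (div_le_one pi_pos).2 hα₁⟩
  have hcos := hasSum_one_div_nat_pow_mul_cos one_ne_zero hx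
  have hvalue : 2 * (π ^ 2 / 6 - (-1) ^ (1 + 1) * (2 * π) ^ (2 * 1) / 2 / (2 * 1).factorial *
      ((Polynomial.bernoulli (2 * 1)).map (algebraMap ℚ ℝ)).eval (α / π)) = 2 * α * (π - α) := by
    simp [Polynomial.bernoulli_def, Finset.sum_range_succ]
    field_simp
    ring
  have hterm (m : ℕ) : cosCoeff (-α) α (m + 1 : ℕ) ^ 2 = 2 * (1 / ((m + 1 : ℕ) : ℝ) ^ 2 -
      1 / ((m + 1 : ℕ) : ℝ) ^ (2 * 1) * cos (2 * π * (m + 1 : ℕ) * (α / π))) := by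
    have hangle : 2 * π * (m + 1 : ℕ) * (α / π) = 2 * ((m + 1 : ℕ) * α) := by
      field_simp
    rw [hangle, cos_two_mul, cosCoeff_neg_self (by positivity), Int.cast_natCast, div_pow, mul_pow,
      sin_sq]
    ring
  simp only [hterm, ← hvalue]
  have hsum := (hasSum_nat_add_iff' 1).2 ((hasSum_zeta_two.sub hcos).mul_left 2)
  simpa only [Finset.range_one, Finset.sum_singleton, Nat.cast_zero, ne_eq, OfNat.ofNat_ne_zero,
    not_false_eq_true, zero_pow, div_zero, zero_mul, sub_zero, mul_zero, mul_one] using hsum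

theorem tendsto_inv_mul_trace_arc {α : ℝ} (hα₀ : 0 ≤ α) (hα₁ : α ≤ π) :
    Tendsto (fun N : ℕ => (N : ℝ)⁻¹ * (toeplitz (cosCoeff (-α) α) N *
      ((2 * π) • 1 - toeplitz (cosCoeff (-α) α) N)).trace) atTop (nhds 0) := by
  have hlim := (tendsto_inv_mul_trace_toeplitz_mul_toeplitz (cosCoeff_even (-α) α)
    (hasSum_sq_cosCoeff_neg_self hα₀ hα₁)).const_sub (4 * π * α)
  rw [cosCoeff_zero, show 4 * π * α - ((α - -α) ^ 2 + 2 * (2 * α * (π - α))) = 0 by ring] at hlim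
  refine hlim.congr' ?_
  filter_upwards [eventually_ne_atTop 0] with N hN
  rw [Matrix.mul_sub, trace_sub, Matrix.mul_smul, Matrix.mul_one, trace_smul, trace_toeplitz,
    cosCoeff_zero, smul_eq_mul]
  field_simp
  ring

end Toeplitz

section StationaryProcess

variable {Ω : Type*}

/-- The vector `(X_{i,j} / √N)`, `1 ≤ i, j ≤ N`, of entries of the process. -/
def scaledBlock (X : ℤ → ℤ → Ω → ℝ) (N : ℕ) (ω : Ω) (p : Fin N × Fin N) : ℝ :=
  (√N)⁻¹ * X ((p.1 : ℕ) + 1) ((p.2 : ℕ) + 1) ω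

lemma scaledW_eq_symMat (X : ℤ → ℤ → Ω → ℝ) (N : ℕ) (ω : Ω) :
    scaledW X N ω = symMat (scaledBlock X N ω) := by
  ext i j
  exact mul_add _ _ _

variable [MeasurableSpace Ω] {P : Measure Ω} {X : ℤ → ℤ → Ω → ℝ}

lemma StatGauss.hasGaussianLaw_comp {ι : Type*} [Finite ι] (hX : StatGauss P X) (e : ι ↪ ℤ × ℤ) :
    HasGaussianLaw (fun ω i => X (e i).1 (e i).2 ω) P := by
  classical
  have := Fintype.ofFinite ι
  have hmeas : Measurable (fun ω i => X (e i).1 (e i).2 ω) :=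
    measurable_pi_iff.2 fun i => hX.meas _ _
  refine ⟨isGaussian_of_map_eq_gaussianReal fun L => ?_⟩
  let c : ι →₀ ℝ := Finsupp.equivFunOnFinite.symm fun i => L fun j => if i = j then 1 else 0
  obtain ⟨v, hv⟩ := hX.gauss (c.embDomain e)
  refine ⟨0, v, ?_⟩
  rw [← hv, Measure.map_map (by fun_prop) hmeas]
  congr 1 with ω
  rw [Function.comp_apply, Finsupp.support_embDomain, Finset.sum_map]
  simp only [Finsupp.embDomain_apply_self]
  rw [Finset.sum_subset (Finset.subset_univ _) fun i _ hi => by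
    rw [Finsupp.notMem_support_iff.1 hi, zero_mul]]
  exact (LinearMap.pi_apply_eq_sum_univ (L : (ι → ℝ) →ₗ[ℝ] ℝ) _).trans
    (Finset.sum_congr rfl fun i _ => mul_comm _ _)

lemma StatGauss.integral_eq_zero (hX : StatGauss P X) (j k : ℤ) : ∫ ω, X j k ω ∂P = 0 := by
  obtain ⟨v, hv⟩ := hX.gauss (Finsupp.single (j, k) 1)
  simp only [Finsupp.support_single _ one_ne_zero, Finset.sum_singleton, Finsupp.single_eq_same,
    one_mul] at hv
  rw [← integral_map (hX.meas j k).aemeasurable (f := fun x => x) (by fun_prop), hv,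
    integral_id_gaussianReal]

lemma integral_cexp_I_mul_neg_self (u : ℤ) (α : ℝ) :
    ∫ x in (-α)..α, Complex.exp (Complex.I * ((u * x : ℝ) : ℂ)) = (cosCoeff (-α) α u : ℂ) := by
  have hsin : ∫ x in (-α)..α, sin (u * x) = 0 := by
    have hodd := intervalIntegral.integral_comp_neg (a := -α) (b := α) (fun x => sin (u * x))
    simp only [mul_neg, sin_neg, neg_neg, intervalIntegral.integral_neg] at hodd
    linarith
  have heuler (x : ℝ) : Complex.exp (Complex.I * ((u * x : ℝ) : ℂ)) =
      ((cos (u * x) : ℝ) : ℂ) + Complex.I * ((sin (u * x) : ℝ) : ℂ) := by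
    rw [mul_comm, Complex.exp_mul_I, ← Complex.ofReal_cos, ← Complex.ofReal_sin,
      mul_comm (u : ℝ), mul_comm Complex.I]
  simp_rw [heuler]
  rw [intervalIntegral.integral_add, intervalIntegral.integral_const_mul,
    intervalIntegral.integral_ofReal, intervalIntegral.integral_ofReal, hsin, cosCoeff,
    Complex.ofReal_zero, mul_zero, add_zero]
  all_goals exact Continuous.intervalIntegrable (by fun_prop) _ _

lemma setIntegral_cexp_I_mul_indicator_Icc (u : ℤ) {α : ℝ} (hα₀ : 0 ≤ α) (hα₁ : α ≤ π) :
    ∫ x in Set.Ioc (-π) π, Complex.exp (Complex.I * ((u * x : ℝ) : ℂ)) *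
      (if x ∈ Set.Icc (-α) α then 1 else 0) = (cosCoeff (-α) α u : ℂ) := by
  rw [← integral_cexp_I_mul_neg_self, intervalIntegral.integral_of_le (by linarith),
    ← integral_Icc_eq_integral_Ioc, ← integral_Icc_eq_integral_Ioc]
  nth_rw 2 [← Set.inter_eq_right.2 (Set.Icc_subset_Icc (neg_le_neg hα₁) hα₁)]
  rw [← setIntegral_indicator measurableSet_Icc]
  simp only [mul_ite, mul_one, mul_zero, Set.indicator]

lemma StatGauss.integral_mul_of_hasSpecDensity {α : ℝ} (hX : StatGauss P X)
    (hα₀ : 0 ≤ α) (hα₁ : α ≤ π)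
    (hf : HasSpecDensity P X fun q =>
      if q.1 ∈ Set.Icc (-α) α ∧ q.2 ∈ Set.Icc (-α) α then 1 else 0) (j k l m : ℤ) :
    ∫ ω, X j k ω * X l m ω ∂P = cosCoeff (-α) α (l - j) * cosCoeff (-α) α (m - k) := by
  have hstat := hX.stat j k (l - j) (m - k)
  simp only [add_sub_cancel] at hstat
  rw [hstat, ← Complex.ofReal_inj, ← hf, specBox, Measure.volume_eq_prod, ← Measure.prod_restrict,
    Complex.ofReal_mul, ← setIntegral_cexp_I_mul_indicator_Icc _ hα₀ hα₁,
    ← setIntegral_cexp_I_mul_indicator_Icc _ hα₀ hα₁, ← integral_prod_mul]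
  congr 1 with q
  simp only [Complex.ofReal_add, mul_add, Complex.exp_add, ite_and]
  split_ifs <;> simp

theorem StatGauss.isKroneckerGaussian_scaledBlock {α : ℝ} (hX : StatGauss P X)
    (hα₀ : 0 ≤ α) (hα₁ : α ≤ π)
    (hf : HasSpecDensity P X fun q =>
      if q.1 ∈ Set.Icc (-α) α ∧ q.2 ∈ Set.Icc (-α) α then 1 else 0) (N : ℕ) :
    IsKroneckerGaussian P (toeplitz (cosCoeff (-α) α) N) (N : ℝ)⁻¹ (scaledBlock X N) where
  hasGaussianLaw := by
    have hinj : Function.Injective fun p : Fin N × Fin N =>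
        (((p.1 : ℕ) + 1 : ℤ), ((p.2 : ℕ) + 1 : ℤ)) := by
      intro p q hpq
      simp only [Prod.mk.injEq] at hpq
      ext <;> omega
    exact (hX.hasGaussianLaw_comp ⟨_, hinj⟩).smul (√N)⁻¹
  mean p := by
    simp only [scaledBlock, integral_const_mul, hX.integral_eq_zero, mul_zero]
  cov p q := by
    simp only [scaledBlock, mul_mul_mul_comm _ (X _ _ _), integral_const_mul,
      hX.integral_mul_of_hasSpecDensity hα₀ hα₁ hf, toeplitz_apply]
    rw [← mul_inv, mul_self_sqrt N.cast_nonneg, ← cosCoeff_even _ _ (p.1 - q.1 : ℤ),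
      ← cosCoeff_even _ _ (p.2 - q.2 : ℤ), add_sub_add_right_eq_sub, add_sub_add_right_eq_sub,
      neg_sub, neg_sub]

end StationaryProcess

section ConvergenceInMeasure

variable {Ω E F : Type*} [MeasurableSpace Ω] {P : Measure Ω}
  [NormedAddCommGroup E] [NormedAddCommGroup F]

theorem tendsto_integral_comp_of_tendstoInMeasure [IsFiniteMeasure P] [ProperSpace E]
    [NormedSpace ℝ F] {f : ℕ → Ω → E} {g : Ω → E} {C : ℝ} {φ : E → F} (hφ : Continuous φ)
    (hf : ∀ N, AEStronglyMeasurable (f N) P) (hC : ∀ N ω, ‖f N ω‖ ≤ C)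
    (hfg : TendstoInMeasure P f atTop g) :
    Tendsto (fun N => ∫ ω, φ (f N ω) ∂P) atTop (nhds (∫ ω, φ (g ω) ∂P)) := by
  obtain ⟨B, hB⟩ := (isCompact_closedBall (0 : E) C).exists_bound_of_continuousOn hφ.continuousOn
  refine tendsto_of_subseq_tendsto fun ns hns => ?_
  obtain ⟨ms, -, hae⟩ := (hfg.comp hns).exists_seq_tendsto_ae
  refine ⟨ms, tendsto_integral_of_dominated_convergence (fun _ => B)
    (fun k => hφ.comp_aestronglyMeasurable (hf _)) (integrable_const B)
    (fun k => ae_of_all _ fun ω => hB _ (by simpa using hC _ ω)) ?_⟩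
  filter_upwards [hae] with ω hω
  exact (hφ.tendsto _).comp hω

lemma tendstoInMeasure_of_norm_sub_le_add {G ι : Type*} [NormedAddCommGroup G] {l : Filter ι}
    {f : ι → Ω → E} {f' : Ω → E} {g : ι → Ω → F} {g' : Ω → F} {h : ι → Ω → G} {h' : Ω → G}
    (hf : TendstoInMeasure P f l f') (hg : TendstoInMeasure P g l g') {c : ℝ} (hc : 0 < c)
    (hle : ∀ᶠ i in l, ∀ ω, ‖h i ω - h' ω‖ ≤ c * (‖f i ω - f' ω‖ + ‖g i ω - g' ω‖)) :
    TendstoInMeasure P h l h' := by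
  rw [tendstoInMeasure_iff_norm] at *
  intro ε hε
  have hδ : 0 < ε / (2 * c) := by positivity
  have hsum := (hf _ hδ).add (hg _ hδ)
  rw [add_zero] at hsum
  refine tendsto_of_tendsto_of_tendsto_of_le_of_le' tendsto_const_nhds hsum
    (.of_forall fun _ => zero_le) (hle.mono fun i hi => ?_)
  refine (measure_mono fun ω hω => ?_).trans (measure_union_le _ _)
  by_contra! hlt
  simp only [Set.mem_union, Set.mem_ofPred_eq, not_or, not_le] at hω hlt
  have hlt' := mul_lt_mul_of_pos_left (add_lt_add hlt.1 hlt.2) hc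
  rw [show c * (ε / (2 * c) + ε / (2 * c)) = ε by field_simp; norm_num] at hlt'
  exact (hω.trans (hi ω)).not_gt hlt'

lemma tendstoInMeasure_zero_of_sq_norm_le {ι : Type*} [IsFiniteMeasure P] {l : Filter ι}
    {f : ι → Ω → E} {s : ι → Ω → ℝ} (hs : ∀ i, Integrable (s i) P)
    (hle : ∀ i ω, ‖f i ω‖ ^ 2 ≤ s i ω) (hlim : Tendsto (fun i => ∫ ω, s i ω ∂P) l (nhds 0)) :
    TendstoInMeasure P f l fun _ => 0 := by
  rw [tendstoInMeasure_iff_measureReal_norm]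
  intro ε hε
  have hmarkov (i : ι) : P.real {ω | ε ≤ ‖f i ω - 0‖} ≤ (ε ^ 2)⁻¹ * ∫ ω, s i ω ∂P := by
    rw [le_inv_mul_iff₀ (by positivity)]
    refine le_trans ?_ (mul_meas_ge_le_integral_of_nonneg
      (ae_of_all _ fun ω => (sq_nonneg _).trans (hle i ω)) (hs i) (ε ^ 2))
    refine mul_le_mul_of_nonneg_left (measureReal_mono fun ω hω => ?_) (sq_nonneg ε)
    rw [Set.mem_ofPred_eq, sub_zero] at hω
    exact (pow_le_pow_left₀ hε.le hω 2).trans (hle i ω)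
  refine squeeze_zero (fun _ => measureReal_nonneg) hmarkov ?_
  simpa using hlim.const_mul (ε ^ 2)⁻¹

end ConvergenceInMeasure

section NormalizedTraces

open Matrix

section Deterministic

variable {n : Type*} [Fintype n] [DecidableEq n]

/-- The normalized trace `tr (B (Y - z)⁻¹) / |n|`. -/
def resolventTrace (B Y : Matrix n n ℝ) (z : ℂ) : ℂ :=
  (Fintype.card n : ℂ)⁻¹ * (complexify B * matResolvent Y z).trace

variable {B Y : Matrix n n ℝ} {z : ℂ}

lemma resolventTrace_smul_one_sub (B Y : Matrix n n ℝ) (z : ℂ) (M : ℝ) :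
    resolventTrace (M • 1 - B) Y z = M * resolventTrace 1 Y z - resolventTrace B Y z := by
  simp only [resolventTrace, map_sub, map_smul, Matrix.sub_mul, trace_sub, smul_mul_assoc,
    trace_smul, Complex.real_smul]
  ring

lemma resolventTrace_mul_self (hY : Y.IsHermitian) (hz : 0 < z.im) (B : Matrix n n ℝ) :
    resolventTrace (B * Y) Y z =
      (Fintype.card n : ℂ)⁻¹ * B.trace + z * resolventTrace B Y z := by
  rw [resolventTrace, map_mul, Matrix.mul_assoc, complexify_mul_matResolvent hY hz, Matrix.mul_add,
    Matrix.mul_one, Matrix.mul_smul, trace_add, trace_smul, trace_complexify, resolventTrace,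
    smul_eq_mul]
  ring

lemma norm_resolventTrace_le (hY : Y.IsHermitian) (hz : 0 < z.im) (hB : B.PosSemidef) :
    ‖resolventTrace B Y z‖ ≤ z.im⁻¹ * ((Fintype.card n : ℝ)⁻¹ * B.trace) := by
  rw [resolventTrace, norm_mul, norm_inv, Complex.norm_natCast, mul_left_comm]
  gcongr
  exact norm_trace_mul_matResolvent_le hY hz hB

lemma im_resolventTrace_nonneg (hY : Y.IsHermitian) (hz : 0 < z.im) (hB : B.PosSemidef) :
    0 ≤ (resolventTrace B Y z).im := by
  rw [resolventTrace, ← Complex.ofReal_natCast, ← Complex.ofReal_inv, Complex.im_ofReal_mul]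
  exact mul_nonneg (by positivity) (im_trace_mul_matResolvent_nonneg hY hz hB)

lemma sq_norm_resolventTrace_le (hY : Y.IsHermitian) (hz : 0 < z.im) (B : Matrix n n ℝ) :
    ‖resolventTrace B Y z‖ ^ 2 ≤ z.im⁻¹ ^ 2 * ((Fintype.card n : ℝ)⁻¹ * (B * Bᴴ).trace) := by
  rw [resolventTrace, norm_mul, norm_inv, Complex.norm_natCast, mul_pow]
  calc ((Fintype.card n : ℝ)⁻¹) ^ 2 * ‖(complexify B * matResolvent Y z).trace‖ ^ 2
      ≤ ((Fintype.card n : ℝ)⁻¹) ^ 2 * (z.im⁻¹ ^ 2 * (Fintype.card n * (B * Bᴴ).trace)) := by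
        gcongr
        exact sq_norm_trace_mul_matResolvent_le hY hz B
    _ = z.im⁻¹ ^ 2 * ((Fintype.card n : ℝ)⁻¹ * (B * Bᴴ).trace) := by
        rcases eq_or_ne (Fintype.card n : ℝ) 0 with h | h
        · simp [h]
        · field_simp

lemma resolventTrace_one {N : ℕ} {A : Matrix (Fin N) (Fin N) ℝ} (hA : A.IsHermitian)
    (hz : 0 < z.im) :
    resolventTrace 1 A z = (N : ℂ)⁻¹ * ∑ j, ((hA.eigenvalues j : ℂ) - z)⁻¹ := by
  rw [resolventTrace, map_one, Matrix.one_mul, trace_matResolvent hA hz, Fintype.card_fin]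

lemma esdEval_re_inv_sub {N : ℕ} {A : Matrix (Fin N) (Fin N) ℝ} (hA : A.IsHermitian)
    (hz : 0 < z.im) : esdEval A (fun x => ((x - z : ℂ)⁻¹).re) = (resolventTrace 1 A z).re := by
  rw [esdEval, dif_pos hA, resolventTrace_one hA hz, ← Complex.ofReal_natCast,
    ← Complex.ofReal_inv, Complex.re_ofReal_mul, Complex.re_sum]

lemma esdEval_im_inv_sub {N : ℕ} {A : Matrix (Fin N) (Fin N) ℝ} (hA : A.IsHermitian)
    (hz : 0 < z.im) : esdEval A (fun x => ((x - z : ℂ)⁻¹).im) = (resolventTrace 1 A z).im := by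
  rw [esdEval, dif_pos hA, resolventTrace_one hA hz, ← Complex.ofReal_natCast,
    ← Complex.ofReal_inv, Complex.im_ofReal_mul, Complex.im_sum]

end Deterministic

/-- The Stieltjes transform, with the sign convention `∫ (x - z)⁻¹ dμ(x)`. -/
def stieltjes (μ : Measure ℝ) (z : ℂ) : ℂ := ∫ x : ℝ, ((x : ℂ) - z)⁻¹ ∂μ

lemma continuous_inv_ofReal_sub {z : ℂ} (hz : 0 < z.im) :
    Continuous fun x : ℝ => ((x : ℂ) - z)⁻¹ :=
  Continuous.inv₀ (by fun_prop) (ofReal_sub_ne_zero hz)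

lemma integrable_inv_ofReal_sub {z : ℂ} (hz : 0 < z.im) (μ : Measure ℝ) [IsFiniteMeasure μ] :
    Integrable (fun x : ℝ => ((x : ℂ) - z)⁻¹) μ :=
  .of_bound (continuous_inv_ofReal_sub hz).aestronglyMeasurable z.im⁻¹
    (ae_of_all _ (norm_inv_ofReal_sub_le hz))

variable {Ω : Type*} [MeasurableSpace Ω] {P : Measure Ω}

theorem ESDTendstoInProb.tendstoInMeasure_resolventTrace
    {A : (N : ℕ) → Ω → Matrix (Fin N) (Fin N) ℝ} {μ : Measure ℝ} [IsFiniteMeasure μ]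
    (hconv : ESDTendstoInProb P A μ) (hA : ∀ N ω, (A N ω).IsHermitian) {z : ℂ} (hz : 0 < z.im) :
    TendstoInMeasure P (fun N ω => resolventTrace 1 (A N ω) z) atTop fun _ => stieltjes μ z := by
  have hint := integrable_inv_ofReal_sub hz μ
  have hre : TendstoInMeasure P (fun N ω => (resolventTrace 1 (A N ω) z).re) atTop
      fun _ => (stieltjes μ z).re := by
    rw [tendstoInMeasure_iff_norm, stieltjes, ← Complex.reCLM_apply,
      ← Complex.reCLM.integral_comp_comm hint]
    simpa only [esdEval_re_inv_sub (hA _ _) hz, Complex.reCLM_apply, Real.norm_eq_abs] using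
      hconv (fun x => ((x - z : ℂ)⁻¹).re)
        (Complex.continuous_re.comp (continuous_inv_ofReal_sub hz))
        ⟨z.im⁻¹, fun x => (Complex.abs_re_le_norm _).trans (norm_inv_ofReal_sub_le hz x)⟩
  have him : TendstoInMeasure P (fun N ω => (resolventTrace 1 (A N ω) z).im) atTop
      fun _ => (stieltjes μ z).im := by
    rw [tendstoInMeasure_iff_norm, stieltjes, ← Complex.imCLM_apply,
      ← Complex.imCLM.integral_comp_comm hint]
    simpa only [esdEval_im_inv_sub (hA _ _) hz, Complex.imCLM_apply, Real.norm_eq_abs] using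
      hconv (fun x => ((x - z : ℂ)⁻¹).im)
        (Complex.continuous_im.comp (continuous_inv_ofReal_sub hz))
        ⟨z.im⁻¹, fun x => (Complex.abs_im_le_norm _).trans (norm_inv_ofReal_sub_le hz x)⟩
  refine tendstoInMeasure_of_norm_sub_le_add hre him one_pos (.of_forall fun N ω => ?_)
  rw [one_mul, ← Complex.sub_re, ← Complex.sub_im]
  exact Complex.norm_le_abs_re_add_abs_im _

end NormalizedTraces

section LimitEquations

open Matrix

variable {Ω : Type*} [MeasurableSpace Ω] {P : Measure Ω} {z : ℂ}

namespace IsKroneckerGaussian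

section Deterministic

variable {n : Type*} [Fintype n] [DecidableEq n] {K B : Matrix n n ℝ} {v : ℝ}
  {x : Ω → n × n → ℝ}

lemma aestronglyMeasurable_resolventTrace (hx : IsKroneckerGaussian P K v x) (hz : 0 < z.im)
    (B : Matrix n n ℝ) :
    AEStronglyMeasurable (fun ω => resolventTrace B (symMat (x ω)) z) P := by
  have hBR := (continuous_const (y := complexify B)).matrix_mul
    (continuous_matResolvent (n := n) isHermitian_symMat continuous_symMat hz)
  exact (continuous_const.mul hBR.matrix_trace).comp_aestronglyMeasurable
    hx.hasGaussianLaw.aemeasurable.aestronglyMeasurable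

lemma integrable_resolventTrace (hx : IsKroneckerGaussian P K v x) (hz : 0 < z.im)
    (hB : B.PosSemidef) : Integrable (fun ω => resolventTrace B (symMat (x ω)) z) P := by
  have := hx.hasGaussianLaw.isProbabilityMeasure
  exact .of_bound (hx.aestronglyMeasurable_resolventTrace hz B) _
    (ae_of_all _ fun ω => norm_resolventTrace_le (isHermitian_symMat _) hz hB)

lemma integrable_trace_sq_mul_matResolvent (hx : IsKroneckerGaussian P K v x) (hz : 0 < z.im)
    (hB : B.IsHermitian) :
    Integrable (fun ω => (complexify B * matResolvent (symMat (x ω)) z *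
      (complexify B * matResolvent (symMat (x ω)) z)).trace) P := by
  have := hx.hasGaussianLaw.isProbabilityMeasure
  have hBR := (continuous_const (y := complexify B)).matrix_mul
    (continuous_matResolvent (n := n) isHermitian_symMat continuous_symMat hz)
  exact .of_bound ((hBR.matrix_mul hBR).matrix_trace.comp_aestronglyMeasurable
    hx.hasGaussianLaw.aemeasurable.aestronglyMeasurable) _
    (ae_of_all _ fun ω => norm_trace_sq_mul_matResolvent_le (isHermitian_symMat _) hz hB)

lemma integral_resolventTrace_self [Nonempty n] (hx : IsKroneckerGaussian P K v x)
    (hz : 0 < z.im) : ∫ ω, resolventTrace (symMat (x ω)) (symMat (x ω)) z ∂P =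
      1 + z * ∫ ω, resolventTrace 1 (symMat (x ω)) z ∂P := by
  have := hx.hasGaussianLaw.isProbabilityMeasure
  have hself (ω : Ω) : resolventTrace (symMat (x ω)) (symMat (x ω)) z =
      1 + z * resolventTrace 1 (symMat (x ω)) z := by
    simpa using resolventTrace_mul_self (isHermitian_symMat (x ω)) hz 1
  simp only [hself]
  rw [integral_add (integrable_const _)
    ((hx.integrable_resolventTrace hz PosSemidef.one).const_mul _), integral_const_mul]
  simp

lemma integral_resolventTrace_self_eq_neg (hx : IsKroneckerGaussian P K (Fintype.card n : ℝ)⁻¹ x)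
    (hz : 0 < z.im) (hK : K.PosSemidef) :
    ∫ ω, resolventTrace (symMat (x ω)) (symMat (x ω)) z ∂P =
      -(2 * ∫ ω, resolventTrace K (symMat (x ω)) z ^ 2 ∂P) -
        2 * (Fintype.card n : ℂ)⁻¹ ^ 2 * ∫ ω, (complexify K * matResolvent (symMat (x ω)) z *
          (complexify K * matResolvent (symMat (x ω)) z)).trace ∂P := by
  have hsq : Integrable (fun ω => resolventTrace K (symMat (x ω)) z ^ 2) P := by
    simp only [sq]
    exact (hx.integrable_resolventTrace hz hK).mul_bdd
      (hx.aestronglyMeasurable_resolventTrace hz K)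
      (ae_of_all _ fun ω => norm_resolventTrace_le (isHermitian_symMat _) hz hK)
  rcases isEmpty_or_nonempty n with _ | _
  · simp [resolventTrace]
  have hsum (ω : Ω) : (complexify K * matResolvent (symMat (x ω)) z).trace ^ 2 +
      (complexify K * matResolvent (symMat (x ω)) z *
        (complexify K * matResolvent (symMat (x ω)) z)).trace =
      (Fintype.card n : ℂ) ^ 2 * resolventTrace K (symMat (x ω)) z ^ 2 +
      (complexify K * matResolvent (symMat (x ω)) z *
        (complexify K * matResolvent (symMat (x ω)) z)).trace := by
    rw [resolventTrace, mul_pow, inv_pow, mul_inv_cancel_left₀ (by simp)]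
  have hdef (ω : Ω) : resolventTrace (symMat (x ω)) (symMat (x ω)) z = (Fintype.card n : ℂ)⁻¹ *
    (complexify (symMat (x ω)) * matResolvent (symMat (x ω)) z).trace := rfl
  rw [integral_congr_ae (ae_of_all _ hdef), integral_const_mul,
    hx.integral_trace_symMat_mul_matResolvent hz, integral_congr_ae (ae_of_all _ hsum),
    integral_add (hsq.const_mul _) (hx.integrable_trace_sq_mul_matResolvent hz hK.isHermitian),
    integral_const_mul]
  push_cast
  field_simp
  ring

theorem norm_one_add_mul_integral_resolventTrace_add_le [Nonempty n]
    (hx : IsKroneckerGaussian P K (Fintype.card n : ℝ)⁻¹ x) (hz : 0 < z.im)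
    (hK : K.PosSemidef) :
    ‖1 + z * ∫ ω, resolventTrace 1 (symMat (x ω)) z ∂P +
      2 * ∫ ω, resolventTrace K (symMat (x ω)) z ^ 2 ∂P‖ ≤
      2 * (Fintype.card n : ℝ)⁻¹ ^ 2 * (z.im⁻¹ ^ 2 * (K * K).trace) := by
  have := hx.hasGaussianLaw.isProbabilityMeasure
  have hnorm := norm_integral_le_of_norm_le_const (μ := P) (ae_of_all _ fun ω =>
    norm_trace_sq_mul_matResolvent_le (isHermitian_symMat (x ω)) hz hK.isHermitian)
  rw [probReal_univ, mul_one] at hnorm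
  rw [← hx.integral_resolventTrace_self hz, hx.integral_resolventTrace_self_eq_neg hz hK,
    sub_add_eq_add_sub, neg_add_cancel, zero_sub, norm_neg, norm_mul, norm_mul, norm_pow, norm_inv,
    Complex.norm_natCast, Complex.norm_ofNat]
  gcongr

end Deterministic

end IsKroneckerGaussian

/-- Matrices `K N` of normalized trace `κ` with `0 ≤ K N ≤ M` for which `(K N) * (M - K N)` has
vanishing normalized trace: `M⁻¹ • K N` behaves asymptotically like an orthogonal projection of
normalized rank `κ / M`. -/
structure IsAsymptoticProjection (M κ : ℝ) (K : (N : ℕ) → Matrix (Fin N) (Fin N) ℝ) : Prop where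
  posSemidef (N : ℕ) : (K N).PosSemidef
  posSemidef_sub (N : ℕ) : (M • 1 - K N).PosSemidef
  trace_eq (N : ℕ) : (K N).trace = N * κ
  tendsto_trace_mul :
    Tendsto (fun N : ℕ => (N : ℝ)⁻¹ * (K N * (M • 1 - K N)).trace) atTop (nhds 0)

namespace IsAsymptoticProjection

variable {M κ : ℝ} {K : (N : ℕ) → Matrix (Fin N) (Fin N) ℝ}
  {x : (N : ℕ) → Ω → Fin N × Fin N → ℝ}

lemma nonneg (hK : IsAsymptoticProjection M κ K) : 0 ≤ κ := by
  have htrace := (hK.posSemidef 1).trace_nonneg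
  rwa [hK.trace_eq, Nat.cast_one, one_mul] at htrace

lemma le (hK : IsAsymptoticProjection M κ K) : κ ≤ M := by
  have htrace := (hK.posSemidef_sub 1).trace_nonneg
  simpa [hK.trace_eq] using htrace

lemma trace_mul_self_le (hK : IsAsymptoticProjection M κ K) (N : ℕ) :
    (K N * K N).trace ≤ M * (N * κ) := by
  have htrace :=
    (posSemidef_mul_smul_one_sub (hK.posSemidef N) (hK.posSemidef_sub N)).trace_nonneg
  rwa [Matrix.mul_sub, trace_sub, Matrix.mul_smul, Matrix.mul_one, trace_smul, hK.trace_eq,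
    smul_eq_mul, sub_nonneg] at htrace

lemma norm_resolventTrace_le (hK : IsAsymptoticProjection M κ K) (hz : 0 < z.im) (N : ℕ)
    {Y : Matrix (Fin N) (Fin N) ℝ} (hY : Y.IsHermitian) :
    ‖resolventTrace (K N) Y z‖ ≤ z.im⁻¹ * κ := by
  refine (_root_.norm_resolventTrace_le hY hz (hK.posSemidef N)).trans ?_
  rw [hK.trace_eq, Fintype.card_fin]
  gcongr
  exact inv_mul_le_of_le_mul₀ (by positivity) hK.nonneg le_rfl

lemma inv_mul_integral_trace_sq_smul_one_sub_mul_le (hK : IsAsymptoticProjection M κ K) {N : ℕ}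
    {y : Ω → Fin N × Fin N → ℝ} (hy : IsKroneckerGaussian P (K N) (N : ℝ)⁻¹ y) :
    (N : ℝ)⁻¹ *
      ∫ ω, ((M • 1 - K N) * (M • 1 - K N) * (symMat (y ω) * symMat (y ω))).trace ∂P ≤
      2 * (M * κ + M ^ 2) * ((N : ℝ)⁻¹ * (K N * (M • 1 - K N)).trace) := by
  rcases N.eq_zero_or_pos with rfl | hN
  · simp
  have hN₁ : (1 : ℝ) ≤ N := by exact_mod_cast hN
  have hpinched :=
    (posSemidef_mul_smul_one_sub (hK.posSemidef N) (hK.posSemidef_sub N)).trace_nonneg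
  have hmoment := hy.integral_trace_sq_smul_one_sub_mul_le (by positivity)
    (hK.nonneg.trans hK.le) (hK.posSemidef N) (hK.posSemidef_sub N)
  rw [hK.trace_eq] at hmoment
  calc _ ≤ (N : ℝ)⁻¹ * (2 * (N : ℝ)⁻¹ * (M * (N * κ) + N * M ^ 2) *
        (K N * (M • 1 - K N)).trace) := by
        refine mul_le_mul_of_nonneg_left (hmoment.trans ?_) (by positivity)
        gcongr
        exact le_mul_of_one_le_left (sq_nonneg M) hN₁
    _ = _ := by field_simp

theorem tendstoInMeasure_resolventTrace_smul_one_sub_mul (hK : IsAsymptoticProjection M κ K)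
    (hx : ∀ N, IsKroneckerGaussian P (K N) (N : ℝ)⁻¹ (x N)) (hz : 0 < z.im) :
    TendstoInMeasure P
      (fun N ω => resolventTrace ((M • 1 - K N) * symMat (x N ω)) (symMat (x N ω)) z)
      atTop fun _ => 0 := by
  have hP := (hx 0).hasGaussianLaw.isProbabilityMeasure
  have htrace (N : ℕ) (ω : Ω) :
      ((M • 1 - K N) * symMat (x N ω) * ((M • 1 - K N) * symMat (x N ω))ᴴ).trace =
        ((M • 1 - K N) * (M • 1 - K N) * (symMat (x N ω) * symMat (x N ω))).trace := by
    rw [conjTranspose_mul, (isHermitian_symMat _).eq, (hK.posSemidef_sub N).isHermitian.eq,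
      ← Matrix.mul_assoc, Matrix.mul_assoc _ (symMat (x N ω)) (symMat (x N ω)), trace_mul_comm,
      ← Matrix.mul_assoc]
  have hmean (N : ℕ) : ∫ ω, z.im⁻¹ ^ 2 * ((N : ℝ)⁻¹ *
        ((M • 1 - K N) * (M • 1 - K N) * (symMat (x N ω) * symMat (x N ω))).trace) ∂P ≤
      z.im⁻¹ ^ 2 * (2 * (M * κ + M ^ 2) * ((N : ℝ)⁻¹ * (K N * (M • 1 - K N)).trace)) := by
    rw [integral_const_mul, integral_const_mul]
    exact mul_le_mul_of_nonneg_left (hK.inv_mul_integral_trace_sq_smul_one_sub_mul_le (hx N))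
      (sq_nonneg _)
  refine tendstoInMeasure_zero_of_sq_norm_le (fun N =>
    (((hx N).integrable_trace_mul_symMat_mul_symMat _).const_mul _).const_mul _)
    (fun N ω => ?_) (squeeze_zero (fun N => integral_nonneg fun ω => ?_) hmean ?_)
  · refine (sq_norm_resolventTrace_le (isHermitian_symMat _) hz _).trans_eq ?_
    rw [htrace, Fintype.card_fin]
  · rw [← htrace]
    have := (posSemidef_self_mul_conjTranspose ((M • 1 - K N) * symMat (x N ω))).trace_nonneg
    positivity
  · simpa only [mul_zero] using (hK.tendsto_trace_mul.const_mul _).const_mul _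

theorem tendstoInMeasure_resolventTrace (hK : IsAsymptoticProjection M κ K)
    (hx : ∀ N, IsKroneckerGaussian P (K N) (N : ℝ)⁻¹ (x N)) {μ : Measure ℝ} [IsFiniteMeasure μ]
    (hconv : ESDTendstoInProb P (fun N ω => symMat (x N ω)) μ) (hz : 0 < z.im) :
    TendstoInMeasure P (fun N ω => resolventTrace (K N) (symMat (x N ω)) z) atTop
      fun _ => M * stieltjes μ z + (M - κ) / z := by
  have hz₀ : z ≠ 0 := by rintro rfl; simp at hz
  refine tendstoInMeasure_of_norm_sub_le_add (c := |M| + ‖z‖⁻¹)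
    (hconv.tendstoInMeasure_resolventTrace (fun N ω => isHermitian_symMat _) hz)
    (hK.tendstoInMeasure_resolventTrace_smul_one_sub_mul hx hz) (by positivity) ?_
  filter_upwards [eventually_ne_atTop 0] with N hN ω
  set g := resolventTrace 1 (symMat (x N ω)) z
  set r := resolventTrace ((M • 1 - K N) * symMat (x N ω)) (symMat (x N ω)) z with hr
  have hN' : (N : ℂ) ≠ 0 := by exact_mod_cast hN
  rw [resolventTrace_mul_self (isHermitian_symMat _) hz, resolventTrace_smul_one_sub, trace_sub,
    trace_smul, trace_one, hK.trace_eq, Fintype.card_fin] at hr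
  have hdiff : resolventTrace (K N) (symMat (x N ω)) z - (M * stieltjes μ z + (M - κ) / z) =
      M * (g - stieltjes μ z) - z⁻¹ * (r - 0) := by
    rw [hr]
    push_cast
    field_simp
    simp only [smul_eq_mul, Complex.ofReal_mul, Complex.ofReal_natCast]
    ring
  rw [hdiff]
  calc ‖M * (g - stieltjes μ z) - z⁻¹ * (r - 0)‖
      ≤ |M| * ‖g - stieltjes μ z‖ + ‖z‖⁻¹ * ‖r - 0‖ := by
        refine (norm_sub_le _ _).trans_eq ?_
        simp only [norm_mul, norm_inv, Complex.norm_real, Real.norm_eq_abs]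
    _ ≤ (|M| + ‖z‖⁻¹) * (‖g - stieltjes μ z‖ + ‖r - 0‖) := by
        rw [add_mul, mul_add, mul_add]
        linarith [mul_nonneg (abs_nonneg M) (norm_nonneg (r - 0)),
          mul_nonneg (inv_nonneg.2 (norm_nonneg z)) (norm_nonneg (g - stieltjes μ z))]

theorem one_add_mul_stieltjes (hK : IsAsymptoticProjection M κ K)
    (hx : ∀ N, IsKroneckerGaussian P (K N) (N : ℝ)⁻¹ (x N)) {μ : Measure ℝ} [IsFiniteMeasure μ]
    (hconv : ESDTendstoInProb P (fun N ω => symMat (x N ω)) μ) (hz : 0 < z.im) :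
    1 + z * stieltjes μ z = -2 * (M * stieltjes μ z + (M - κ) / z) ^ 2 := by
  have hP := (hx 0).hasGaussianLaw.isProbabilityMeasure
  have hone (N : ℕ) : z.im⁻¹ * ((Fintype.card (Fin N) : ℝ)⁻¹ *
      (1 : Matrix (Fin N) (Fin N) ℝ).trace) ≤ z.im⁻¹ := by
    rw [trace_one]
    exact mul_le_of_le_one_right (by positivity) (inv_mul_le_one)
  have hg : Tendsto (fun N => ∫ ω, resolventTrace 1 (symMat (x N ω)) z ∂P) atTop
      (nhds (stieltjes μ z)) := by
    simpa using tendsto_integral_comp_of_tendstoInMeasure (φ := id) (C := z.im⁻¹) continuous_id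
      (fun N => (hx N).aestronglyMeasurable_resolventTrace hz 1)
      (fun N ω => (_root_.norm_resolventTrace_le (isHermitian_symMat _) hz .one).trans (hone N))
      (hconv.tendstoInMeasure_resolventTrace (fun N ω => isHermitian_symMat _) hz)
  have hT : Tendsto (fun N => ∫ ω, resolventTrace (K N) (symMat (x N ω)) z ^ 2 ∂P) atTop
      (nhds ((M * stieltjes μ z + (M - κ) / z) ^ 2)) := by
    simpa using tendsto_integral_comp_of_tendstoInMeasure (φ := (· ^ 2)) (C := z.im⁻¹ * κ)
      (continuous_pow 2) (fun N => (hx N).aestronglyMeasurable_resolventTrace hz (K N))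
      (fun N ω => hK.norm_resolventTrace_le hz N (isHermitian_symMat _))
      (hK.tendstoInMeasure_resolventTrace hx hconv hz)
  have hzero : Tendsto (fun N => 1 + z * ∫ ω, resolventTrace 1 (symMat (x N ω)) z ∂P +
      2 * ∫ ω, resolventTrace (K N) (symMat (x N ω)) z ^ 2 ∂P) atTop (nhds 0) := by
    refine squeeze_zero_norm' (a := fun N : ℕ => 2 * z.im⁻¹ ^ 2 * (M * κ) * (N : ℝ)⁻¹) ?_ ?_
    · filter_upwards [eventually_ne_atTop 0] with N hN
      have : NeZero N := ⟨hN⟩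
      have hN' : (N : ℝ) ≠ 0 := by exact_mod_cast hN
      have hSD := IsKroneckerGaussian.norm_one_add_mul_integral_resolventTrace_add_le
        (n := Fin N) (by simpa using hx N) hz (hK.posSemidef N)
      refine hSD.trans ?_
      rw [Fintype.card_fin]
      calc 2 * (N : ℝ)⁻¹ ^ 2 * (z.im⁻¹ ^ 2 * (K N * K N).trace)
          ≤ 2 * (N : ℝ)⁻¹ ^ 2 * (z.im⁻¹ ^ 2 * (M * (N * κ))) := by
            gcongr
            exact hK.trace_mul_self_le N
        _ = 2 * z.im⁻¹ ^ 2 * (M * κ) * (N : ℝ)⁻¹ := by field_simp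
    · simpa only [mul_zero] using
        (tendsto_inv_atTop_nhds_zero_nat (𝕜 := ℝ)).const_mul (2 * z.im⁻¹ ^ 2 * (M * κ))
  have hlim := tendsto_nhds_unique (((hg.const_mul z).const_add 1).add (hT.const_mul 2)) hzero
  linear_combination hlim

theorem im_stieltjes_add_div_nonneg (hK : IsAsymptoticProjection M κ K)
    (hx : ∀ N, IsKroneckerGaussian P (K N) (N : ℝ)⁻¹ (x N)) {μ : Measure ℝ} [IsFiniteMeasure μ]
    (hconv : ESDTendstoInProb P (fun N ω => symMat (x N ω)) μ) (hz : 0 < z.im) :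
    0 ≤ (M * stieltjes μ z + (M - κ) / z).im := by
  have hP := (hx 0).hasGaussianLaw.isProbabilityMeasure
  have hT : Tendsto (fun N => ∫ ω, (resolventTrace (K N) (symMat (x N ω)) z).im ∂P) atTop
      (nhds (M * stieltjes μ z + (M - κ) / z).im) := by
    simpa using tendsto_integral_comp_of_tendstoInMeasure (φ := Complex.im) (C := z.im⁻¹ * κ)
      Complex.continuous_im (fun N => (hx N).aestronglyMeasurable_resolventTrace hz (K N))
      (fun N ω => hK.norm_resolventTrace_le hz N (isHermitian_symMat _))
      (hK.tendstoInMeasure_resolventTrace hx hconv hz)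
  exact ge_of_tendsto' hT fun N => integral_nonneg fun ω =>
    im_resolventTrace_nonneg (isHermitian_symMat _) hz (hK.posSemidef N)

end IsAsymptoticProjection

end LimitEquations

section StieltjesInversion

lemma inv_sub_add_mul_I_im (x u y : ℝ) :
    (((x : ℂ) - (u + y * Complex.I))⁻¹).im = y / ((x - u) ^ 2 + y ^ 2) := by
  rw [Complex.inv_im, Complex.normSq_apply]
  simp only [Complex.sub_im, Complex.ofReal_im, Complex.add_im, Complex.mul_im, Complex.ofReal_re,
    Complex.I_im, mul_one, Complex.I_re, mul_zero, add_zero, zero_add, zero_sub, neg_neg,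
    Complex.sub_re, Complex.add_re, Complex.mul_re, sub_zero]
  congr 1
  ring

lemma im_stieltjes (μ : Measure ℝ) [IsFiniteMeasure μ] {y : ℝ} (hy : 0 < y) (u : ℝ) :
    (stieltjes μ (u + y * Complex.I)).im = ∫ x, y / ((x - u) ^ 2 + y ^ 2) ∂μ := by
  have hz : 0 < ((u : ℂ) + y * Complex.I).im := by simpa using hy
  rw [stieltjes, ← Complex.imCLM_apply,
    ← Complex.imCLM.integral_comp_comm (integrable_inv_ofReal_sub hz μ)]
  simp only [Complex.imCLM_apply, inv_sub_add_mul_I_im]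

lemma integral_mul_poissonKernel (f : ℝ → ℝ) (x : ℝ) {y : ℝ} (hy : 0 < y) :
    ∫ u, f u * (y / ((x - u) ^ 2 + y ^ 2)) = ∫ s, f (x + y * s) * (1 + s ^ 2)⁻¹ := by
  have hscale (s : ℝ) : f (x + y * s) * (1 + s ^ 2)⁻¹ =
      y * (f (x + y * s) * (y / ((y * s) ^ 2 + y ^ 2))) := by
    field_simp
    ring
  simp only [hscale]
  rw [integral_const_mul,
    Measure.integral_comp_mul_left (fun u => f (x + u) * (y / (u ^ 2 + y ^ 2))) y, abs_of_pos
    (inv_pos.2 hy), smul_eq_mul, mul_inv_cancel_left₀ hy.ne', ← integral_add_left_eq_self _ x]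
  simp only [sub_add_cancel_left, neg_sq]

theorem integral_poissonKernel_eq_integral_im_stieltjes (μ : Measure ℝ) [IsFiniteMeasure μ]
    {f : ℝ → ℝ} (hf : Integrable f) {y : ℝ} (hy : 0 < y) :
    ∫ x, (∫ s, f (x + y * s) * (1 + s ^ 2)⁻¹) ∂μ =
      ∫ u, f u * (stieltjes μ (u + y * Complex.I)).im := by
  have hkernel : Continuous fun p : ℝ × ℝ => y / ((p.1 - p.2) ^ 2 + y ^ 2) :=
    continuous_const.div (by fun_prop) fun p => by positivity
  have hint : Integrable (fun p : ℝ × ℝ => f p.2 * (y / ((p.1 - p.2) ^ 2 + y ^ 2)))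
      (μ.prod volume) := by
    refine (hf.comp_snd μ).mul_bdd (c := y⁻¹) hkernel.aestronglyMeasurable
      (ae_of_all _ fun p => ?_)
    rw [Real.norm_of_nonneg (by positivity), div_le_iff₀ (by positivity), mul_add, sq y,
      inv_mul_cancel_left₀ hy.ne']
    exact le_add_of_nonneg_left (by positivity)
  simp only [← integral_mul_poissonKernel f _ hy]
  rw [integral_integral_swap hint]
  simp only [integral_const_mul, im_stieltjes μ hy]

lemma norm_mul_inv_one_add_sq_le {a C : ℝ} (ha : ‖a‖ ≤ C) (s : ℝ) :
    ‖a * (1 + s ^ 2)⁻¹‖ ≤ C * (1 + s ^ 2)⁻¹ := by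
  rw [norm_mul, Real.norm_of_nonneg (by positivity : 0 ≤ (1 + s ^ 2)⁻¹)]
  gcongr

theorem tendsto_integral_poissonKernel (μ : Measure ℝ) [IsFiniteMeasure μ] {f : ℝ → ℝ} {C : ℝ}
    (hf : Continuous f) (hC : ∀ x, ‖f x‖ ≤ C) {y : ℕ → ℝ} (hy : Tendsto y atTop (nhds 0)) :
    Tendsto (fun n => ∫ x, (∫ s, f (x + y n * s) * (1 + s ^ 2)⁻¹) ∂μ) atTop
      (nhds (∫ x, f x * π ∂μ)) := by
  have hint := integrable_inv_one_add_sq.const_mul C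
  have hinv : Continuous fun s : ℝ => (1 + s ^ 2)⁻¹ :=
    Continuous.inv₀ (by fun_prop) fun s => by positivity
  refine tendsto_integral_of_dominated_convergence (fun _ => C * π) (fun n => ?_)
    (integrable_const _) (fun n => ae_of_all _ fun x => ?_) (ae_of_all _ fun x => ?_)
  · have hc : Continuous fun p : ℝ × ℝ => f (p.1 + y n * p.2) * (1 + p.2 ^ 2)⁻¹ :=
      (hf.comp (by fun_prop)).mul (hinv.comp continuous_snd)
    exact hc.stronglyMeasurable.integral_prod_right.aestronglyMeasurable
  · rw [← integral_univ_inv_one_add_sq, ← integral_const_mul]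
    exact norm_integral_le_of_norm_le hint
      (ae_of_all _ fun s => norm_mul_inv_one_add_sq_le (hC _) s)
  · rw [← integral_univ_inv_one_add_sq, ← integral_const_mul]
    refine tendsto_integral_of_dominated_convergence _
      (fun n => ((hf.comp (by fun_prop)).mul hinv).aestronglyMeasurable) hint
      (fun n => ae_of_all _ fun s => norm_mul_inv_one_add_sq_le (hC _) s)
      (ae_of_all _ fun s => Tendsto.mul_const _ ?_)
    have hshift : Tendsto (fun n => x + y n * s) atTop (nhds x) := by
      simpa using (hy.mul_const s).const_add x
    exact (hf.tendsto x).comp hshift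

theorem eq_of_stieltjes_eq {μ ν : Measure ℝ} [IsFiniteMeasure μ] [IsFiniteMeasure ν]
    (h : ∀ z : ℂ, 0 < z.im → stieltjes μ z = stieltjes ν z) : μ = ν := by
  refine Measure.ext_of_integral_eq_on_compactlySupported fun f => ?_
  obtain ⟨C, hC⟩ := f.hasCompactSupport.exists_bound_of_continuous f.continuous
  have hint : Integrable f := f.continuous.integrable_of_hasCompactSupport f.hasCompactSupport
  have hpoisson (n : ℕ) :
      ∫ x, (∫ s, f (x + 1 / (n + 1 : ℝ) * s) * (1 + s ^ 2)⁻¹) ∂μ =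
        ∫ x, (∫ s, f (x + 1 / (n + 1 : ℝ) * s) * (1 + s ^ 2)⁻¹) ∂ν := by
    have hy : 0 < 1 / ((n : ℝ) + 1) := by positivity
    rw [integral_poissonKernel_eq_integral_im_stieltjes μ hint hy,
      integral_poissonKernel_eq_integral_im_stieltjes ν hint hy]
    congr! 3 with u
    refine congrArg Complex.im (h _ ?_)
    rwa [Complex.add_im, Complex.ofReal_im, Complex.im_ofReal_mul, Complex.I_im, mul_one, zero_add]
  have hlim (ρ : Measure ℝ) [IsFiniteMeasure ρ] := tendsto_integral_poissonKernel ρ f.continuous hC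
    (tendsto_one_div_add_atTop_nhds_zero_nat (𝕜 := ℝ))
  have hpi := tendsto_nhds_unique ((hlim μ).congr hpoisson) (hlim ν)
  rw [integral_mul_const, integral_mul_const] at hpi
  exact mul_right_cancel₀ pi_ne_zero hpi

end StieltjesInversion

section Semicircle

lemma integral_cos_natCast_mul {m : ℕ} (hm : m ≠ 0) : ∫ θ in (0 : ℝ)..π, cos (m * θ) = 0 := by
  rw [intervalIntegral.integral_comp_mul_left _ (by exact_mod_cast hm), integral_cos]
  simp

lemma integral_sin_natCast_add_one_mul_mul_sin (n : ℕ) :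
    ∫ θ in (0 : ℝ)..π, sin ((n + 1) * θ) * sin θ = if n = 0 then π / 2 else 0 := by
  have hprod (θ : ℝ) : sin ((n + 1) * θ) * sin θ =
      (1 / 2) * (cos ((n : ℕ) * θ) - cos ((n + 2 : ℕ) * θ)) := by
    rw [show ((n : ℕ) : ℝ) * θ = (n + 1) * θ - θ by ring,
      show ((n + 2 : ℕ) : ℝ) * θ = (n + 1) * θ + θ by push_cast; ring, cos_sub, cos_add]
    ring
  simp only [hprod]
  rw [intervalIntegral.integral_const_mul, intervalIntegral.integral_sub
    (Continuous.intervalIntegrable (by fun_prop) _ _)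
    (Continuous.intervalIntegrable (by fun_prop) _ _),
    integral_cos_natCast_mul (m := n + 2) (by lia)]
  split_ifs with hn
  · subst hn
    simp [div_eq_inv_mul]
  · simp [integral_cos_natCast_mul hn]

lemma one_sub_two_mul_mul_cos_add_sq (q : ℂ) (θ : ℝ) :
    1 - 2 * q * cos θ + q ^ 2 =
      (1 - q * Complex.exp (θ * Complex.I)) * (1 - q * Complex.exp (-θ * Complex.I)) := by
  have hinv : Complex.exp (θ * Complex.I) * Complex.exp (-θ * Complex.I) = 1 := by
    rw [← Complex.exp_add, neg_mul, add_neg_cancel, Complex.exp_zero]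
  rw [Complex.ofReal_cos, Complex.cos]
  linear_combination (-q ^ 2) * hinv

variable {q : ℂ}

lemma norm_mul_exp_ofReal_mul_I_lt (hq : ‖q‖ < 1) (θ : ℝ) :
    ‖q * Complex.exp (θ * Complex.I)‖ < 1 := by
  rwa [norm_mul, Complex.norm_exp_ofReal_mul_I, mul_one]

lemma one_sub_ne_zero_of_norm_lt_one {w : ℂ} (hw : ‖w‖ < 1) : 1 - w ≠ 0 := by
  rintro h
  rw [← sub_eq_zero.1 h, norm_one] at hw
  exact hw.false

lemma hasSum_pow_mul_sin (hq : ‖q‖ < 1) (θ : ℝ) :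
    HasSum (fun n : ℕ => q ^ n * (sin ((n + 1) * θ) : ℂ))
      (sin θ / (1 - 2 * q * cos θ + q ^ 2)) := by
  set w := Complex.exp (θ * Complex.I) with hw
  set v := Complex.exp (-θ * Complex.I) with hv
  have hqw : ‖q * w‖ < 1 := norm_mul_exp_ofReal_mul_I_lt hq θ
  have hqv : ‖q * v‖ < 1 := by simpa [hv] using norm_mul_exp_ofReal_mul_I_lt hq (-θ)
  have hw₁ := one_sub_ne_zero_of_norm_lt_one hqw
  have hv₁ := one_sub_ne_zero_of_norm_lt_one hqv
  have hgeom := (((hasSum_geometric_of_norm_lt_one hqv).mul_left v).sub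
    ((hasSum_geometric_of_norm_lt_one hqw).mul_left w)).mul_left (Complex.I / 2)
  have hterm (n : ℕ) : q ^ n * (sin ((n + 1) * θ) : ℂ) =
      Complex.I / 2 * (v * (q * v) ^ n - w * (q * w) ^ n) := by
    rw [Complex.ofReal_sin, Complex.sin, mul_pow, mul_pow,
      show -((((n + 1) * θ : ℝ)) : ℂ) * Complex.I = (n + 1 : ℕ) * (-θ * Complex.I) by
        push_cast; ring,
      show ((((n + 1) * θ : ℝ)) : ℂ) * Complex.I = (n + 1 : ℕ) * (θ * Complex.I) by
        push_cast; ring,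
      Complex.exp_nat_mul, Complex.exp_nat_mul]
    ring
  have hvalue : sin θ / (1 - 2 * q * cos θ + q ^ 2) =
      Complex.I / 2 * (v * (1 - q * v)⁻¹ - w * (1 - q * w)⁻¹) := by
    rw [one_sub_two_mul_mul_cos_add_sq, ← hw, ← hv, Complex.ofReal_sin, Complex.sin, ← hw, ← hv,
      ← div_eq_mul_inv, ← div_eq_mul_inv, div_sub_div _ _ hv₁ hw₁, mul_comm (1 - q * w)]
    ring
  simpa only [hterm, hvalue] using hgeom

theorem integral_sin_sq_div (hq : ‖q‖ < 1) :
    ∫ θ in (0 : ℝ)..π, (sin θ : ℂ) ^ 2 / (1 - 2 * q * cos θ + q ^ 2) = (π : ℂ) / 2 := by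
  have hterm (n : ℕ) : ∫ θ in (0 : ℝ)..π, q ^ n * ((sin ((n + 1) * θ) * sin θ : ℝ) : ℂ) =
      if n = 0 then (π : ℂ) / 2 else 0 := by
    rw [intervalIntegral.integral_const_mul, intervalIntegral.integral_ofReal,
      integral_sin_natCast_add_one_mul_mul_sin]
    split_ifs with hn <;> simp [hn]
  have hpointwise (θ : ℝ) : HasSum (fun n : ℕ => q ^ n * ((sin ((n + 1) * θ) * sin θ : ℝ) : ℂ))
      ((sin θ : ℂ) ^ 2 / (1 - 2 * q * cos θ + q ^ 2)) := by
    have hmul := (hasSum_pow_mul_sin hq θ).mul_right (sin θ : ℂ)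
    rw [div_mul_eq_mul_div, ← sq] at hmul
    simpa only [Complex.ofReal_mul, mul_assoc] using hmul
  have hsum := intervalIntegral.hasSum_integral_of_dominated_convergence (μ := volume)
    (a := 0) (b := π) (fun n _ => ‖q‖ ^ n)
    (fun n => Continuous.aestronglyMeasurable (by fun_prop))
    (fun n => ae_of_all _ fun θ _ => ?_)
    (ae_of_all _ fun θ _ => summable_geometric_of_lt_one (norm_nonneg _) hq) (by simp)
    (ae_of_all _ fun θ _ => hpointwise θ)
  · simp only [hterm] at hsum
    exact hsum.unique (hasSum_ite_eq 0 _)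
  · rw [norm_mul, norm_pow, Complex.norm_real, norm_mul]
    exact mul_le_of_le_one_right (by positivity)
      (mul_le_one₀ (abs_sin_le_one _) (abs_nonneg _) (abs_sin_le_one _))

/-- The semicircle density without its cutoff, hence continuous: the real square root already
vanishes outside `[-2√γ, 2√γ]`. -/
def semicircleDensity (γ x : ℝ) : ℝ := (2 * π * √γ)⁻¹ * √(4 - x ^ 2 / γ)

variable {γ : ℝ}

lemma continuous_semicircleDensity (γ : ℝ) : Continuous (semicircleDensity γ) := by
  unfold semicircleDensity
  fun_prop

lemma WSL_eq_withDensity_restrict (γ : ℝ) :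
    WSL γ = (volume.restrict (Set.Icc (-(2 * √γ)) (2 * √γ))).withDensity
      fun x => ENNReal.ofReal (semicircleDensity γ x) := by
  rw [← withDensity_indicator measurableSet_Icc, WSL]
  congr 1
  ext x
  simp only [Set.indicator_apply, Set.mem_Icc, ← abs_le, semicircleDensity]
  split_ifs <;> simp

instance isFiniteMeasure_WSL (γ : ℝ) : IsFiniteMeasure (WSL γ) := by
  rw [WSL_eq_withDensity_restrict]
  exact isFiniteMeasure_withDensity_ofReal (continuous_semicircleDensity γ).integrableOn_Icc.2

lemma integral_WSL (γ : ℝ) (g : ℝ → ℂ) :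
    ∫ x, g x ∂WSL γ = ∫ x in (-(2 * √γ))..(2 * √γ), (semicircleDensity γ x : ℂ) * g x := by
  have hnonneg (x : ℝ) : 0 ≤ semicircleDensity γ x := by
    unfold semicircleDensity
    positivity
  rw [WSL_eq_withDensity_restrict, integral_withDensity_eq_integral_toReal_smul
    (continuous_semicircleDensity γ).measurable.ennreal_ofReal
    (ae_of_all _ fun x => ENNReal.ofReal_lt_top),
    intervalIntegral.integral_of_le (neg_le_self (by positivity)), integral_Icc_eq_integral_Ioc]
  simp only [ENNReal.toReal_ofReal (hnonneg _), Complex.real_smul]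

lemma semicircleDensity_two_mul_sqrt_mul_cos (hγ : 0 < γ) {θ : ℝ} (hθ : θ ∈ Set.Icc 0 π) :
    semicircleDensity γ (2 * √γ * cos θ) = (π * √γ)⁻¹ * sin θ := by
  have hsin := sin_nonneg_of_mem_Icc hθ
  have hsq : 4 - (2 * √γ * cos θ) ^ 2 / γ = (2 * sin θ) ^ 2 := by
    rw [mul_pow, mul_pow, sq_sqrt hγ.le, mul_pow, sin_sq]
    field_simp
    ring
  rw [semicircleDensity, hsq, sqrt_sq (by positivity)]
  field_simp

theorem integral_WSL_eq_integral_sin_sq (hγ : 0 < γ) {g : ℝ → ℂ} (hg : Continuous g) :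
    ∫ x, g x ∂WSL γ = 2 / π * ∫ θ in (0 : ℝ)..π, (sin θ : ℂ) ^ 2 * g (2 * √γ * cos θ) := by
  have hsubst := intervalIntegral.integral_deriv_smul_comp (a := π) (b := 0)
    (f := fun θ => 2 * √γ * cos θ) (f' := fun θ => 2 * √γ * -sin θ)
    (g := fun x => (semicircleDensity γ x : ℂ) * g x)
    (fun θ _ => (hasDerivAt_cos θ).const_mul _) (by fun_prop)
    ((Complex.continuous_ofReal.comp (continuous_semicircleDensity γ)).mul hg)
  simp only [cos_pi, cos_zero, mul_neg, mul_one] at hsubst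
  rw [integral_WSL, ← hsubst, intervalIntegral.integral_symm, ← intervalIntegral.integral_neg,
    ← intervalIntegral.integral_const_mul]
  refine intervalIntegral.integral_congr fun θ hθ => ?_
  rw [Set.uIcc_of_le pi_pos.le] at hθ
  have hsqrt : (√γ : ℂ) ≠ 0 := by exact_mod_cast (sqrt_pos.2 hγ).ne'
  simp only [Function.comp_apply, semicircleDensity_two_mul_sqrt_mul_cos hγ hθ, Complex.real_smul]
  push_cast
  field_simp

theorem stieltjes_WSL (hγ : 0 < γ) (hq : ‖q‖ < 1) {z : ℂ} (hz : 0 < z.im)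
    (hzq : z = √γ * (q + q⁻¹)) : stieltjes (WSL γ) z = -(q / √γ) := by
  have hq₀ : q ≠ 0 := by
    rintro rfl
    simp [hzq] at hz
  have hsqrt : (√γ : ℂ) ≠ 0 := by exact_mod_cast (sqrt_pos.2 hγ).ne'
  have hπ : (π : ℂ) ≠ 0 := by exact_mod_cast pi_ne_zero
  have hkernel (θ : ℝ) : (sin θ : ℂ) ^ 2 * (((2 * √γ * cos θ : ℝ) : ℂ) - z)⁻¹ =
      -(q / √γ) * ((sin θ : ℂ) ^ 2 / (1 - 2 * q * cos θ + q ^ 2)) := by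
    have hfactor : ((2 * √γ * cos θ : ℝ) : ℂ) - z =
        -(√γ / q) * (1 - 2 * q * cos θ + q ^ 2) := by
      rw [hzq]
      push_cast
      field_simp
      ring
    rw [hfactor, mul_inv, inv_neg, inv_div]
    ring
  rw [stieltjes, integral_WSL_eq_integral_sin_sq hγ (continuous_inv_ofReal_sub hz)]
  simp only [hkernel]
  rw [intervalIntegral.integral_const_mul, integral_sin_sq_div hq]
  field_simp

end Semicircle

section LimitLaw

lemma norm_lt_one_of_im_add_inv_pos {q : ℂ} (h : 0 < (q + q⁻¹).im) (hq : q.im ≤ 0) : ‖q‖ < 1 := by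
  rw [Complex.add_im, Complex.inv_im, Complex.normSq_eq_norm_sq] at h
  by_contra! hnorm
  have hdiv : -q.im / ‖q‖ ^ 2 ≤ -q.im :=
    div_le_self (neg_nonneg.2 hq) (one_le_pow₀ hnorm)
  linarith

/-- The limit of the Stieltjes transforms solves a quadratic equation in `T`, and the substitution
`q = -2 M T / √γ` with `γ = 2 M κ` turns it into the Joukowski form of the semicircle law. -/
lemma eq_sqrt_mul_add_inv {M κ : ℝ} (hM : 0 < M) (hκ : 0 < κ) {z T : ℂ}
    (hT : z * T = -(2 * M * T ^ 2) - κ) :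
    z = √(2 * M * κ) * (-(2 * M * T) / √(2 * M * κ) + (-(2 * M * T) / √(2 * M * κ))⁻¹) := by
  have hM₀ : (M : ℂ) ≠ 0 := by exact_mod_cast hM.ne'
  have hT₀ : T ≠ 0 := by
    rintro rfl
    simp [hκ.ne'] at hT
  have hsqrt : (√(2 * M * κ) : ℂ) ≠ 0 := by
    exact_mod_cast (sqrt_pos.2 (by positivity : 0 < 2 * M * κ)).ne'
  have hsq : (√(2 * M * κ) : ℂ) ^ 2 = 2 * M * κ := by
    exact_mod_cast sq_sqrt (by positivity : 0 ≤ 2 * M * κ)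
  field_simp
  linear_combination 2 * M * hT + hsq

namespace IsAsymptoticProjection

variable {Ω : Type*} [MeasurableSpace Ω] {P : Measure Ω} {M κ : ℝ}
  {K : (N : ℕ) → Matrix (Fin N) (Fin N) ℝ} {x : (N : ℕ) → Ω → Fin N × Fin N → ℝ}
  {μ : Measure ℝ} [IsFiniteMeasure μ]

lemma mul_stieltjes_add_div (hK : IsAsymptoticProjection M κ K)
    (hx : ∀ N, IsKroneckerGaussian P (K N) (N : ℝ)⁻¹ (x N))
    (hconv : ESDTendstoInProb P (fun N ω => symMat (x N ω)) μ) {z : ℂ} (hz : 0 < z.im) :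
    z * (M * stieltjes μ z + (M - κ) / z) =
      -(2 * M * (M * stieltjes μ z + (M - κ) / z) ^ 2) - κ := by
  have hz₀ : z ≠ 0 := by
    rintro rfl
    simp at hz
  have hlim := hK.one_add_mul_stieltjes hx hconv hz
  have hexpand : z * (M * stieltjes μ z + (M - κ) / z) = M * (1 + z * stieltjes μ z) - κ := by
    field_simp
    ring
  linear_combination hexpand + M * hlim

lemma stieltjes_eq (hK : IsAsymptoticProjection M κ K) (hκ : 0 < κ)
    (hx : ∀ N, IsKroneckerGaussian P (K N) (N : ℝ)⁻¹ (x N))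
    (hconv : ESDTendstoInProb P (fun N ω => symMat (x N ω)) μ) {z : ℂ} (hz : 0 < z.im) :
    stieltjes μ z =
      (1 - κ / M : ℝ) * (0 - z)⁻¹ + (κ / M : ℝ) * stieltjes (WSL (2 * M * κ)) z := by
  have hM := hκ.trans_le hK.le
  have hz₀ : z ≠ 0 := by
    rintro rfl
    simp at hz
  have hM₀ : (M : ℂ) ≠ 0 := by exact_mod_cast hM.ne'
  have hκ₀ : (κ : ℂ) ≠ 0 := by exact_mod_cast hκ.ne'
  have hγ : 0 < 2 * M * κ := by positivity
  have hsq : (√(2 * M * κ) : ℂ) ^ 2 = 2 * M * κ := by exact_mod_cast sq_sqrt hγ.le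
  set T := M * stieltjes μ z + (M - κ) / z with hT
  set q := -(2 * M * T) / √(2 * M * κ) with hq
  have hzq : z = √(2 * M * κ) * (q + q⁻¹) :=
    eq_sqrt_mul_add_inv hM hκ (hK.mul_stieltjes_add_div hx hconv hz)
  have hq_im : q.im ≤ 0 := by
    have hT_im := hK.im_stieltjes_add_div_nonneg hx hconv hz
    rw [← hT] at hT_im
    have hreal : q = ((-(2 * M / √(2 * M * κ)) : ℝ) : ℂ) * T := by
      rw [hq]
      push_cast
      ring
    rw [hreal, Complex.im_ofReal_mul]
    exact mul_nonpos_of_nonpos_of_nonneg (neg_nonpos.2 (by positivity)) hT_im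
  have hq_norm : ‖q‖ < 1 := by
    refine norm_lt_one_of_im_add_inv_pos ?_ hq_im
    rw [hzq, Complex.im_ofReal_mul] at hz
    exact pos_of_mul_pos_right hz (sqrt_nonneg _)
  have hqT : q / √(2 * M * κ) = -(T / κ) := by
    rw [hq, div_div, ← sq, hsq]
    field_simp
  rw [stieltjes_WSL hγ hq_norm hz hzq, hqT, hT]
  push_cast
  field_simp
  ring

theorem eq_dirac_add_WSL (hK : IsAsymptoticProjection M κ K) (hκ : 0 < κ)
    (hx : ∀ N, IsKroneckerGaussian P (K N) (N : ℝ)⁻¹ (x N))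
    (hconv : ESDTendstoInProb P (fun N ω => symMat (x N ω)) μ) :
    μ = ENNReal.ofReal (1 - κ / M) • Measure.dirac 0 +
      ENNReal.ofReal (κ / M) • WSL (2 * M * κ) := by
  have hM := hκ.trans_le hK.le
  have := Measure.smul_finite (Measure.dirac (0 : ℝ)) (ENNReal.ofReal_ne_top (r := 1 - κ / M))
  have := Measure.smul_finite (WSL (2 * M * κ)) (ENNReal.ofReal_ne_top (r := κ / M))
  refine eq_of_stieltjes_eq fun z hz => ?_
  rw [hK.stieltjes_eq hκ hx hconv hz]
  simp only [stieltjes]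
  rw [integral_add_measure (integrable_inv_ofReal_sub hz _) (integrable_inv_ofReal_sub hz _),
    integral_smul_measure, integral_smul_measure, integral_dirac,
    ENNReal.toReal_ofReal (sub_nonneg.2 ((div_le_one hM).2 hK.le)),
    ENNReal.toReal_ofReal (by positivity), Complex.real_smul, Complex.real_smul,
    Complex.ofReal_zero]

end IsAsymptoticProjection

lemma isAsymptoticProjection_toeplitz_cosCoeff {α : ℝ} (hα₀ : 0 ≤ α) (hα₁ : α ≤ π) :
    IsAsymptoticProjection (2 * π) (2 * α) (toeplitz (cosCoeff (-α) α)) where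
  posSemidef := posSemidef_toeplitz_cosCoeff (neg_le_self hα₀)
  posSemidef_sub := posSemidef_two_pi_smul_one_sub_toeplitz hα₁
  trace_eq N := by rw [trace_toeplitz, cosCoeff_zero, sub_neg_eq_add, two_mul]
  tendsto_trace_mul := tendsto_inv_mul_trace_arc hα₀ hα₁

end LimitLaw

theorem statement18_general {Ω : Type*} [MeasurableSpace Ω] {P : Measure Ω} {X : ℤ → ℤ → Ω → ℝ}
    (hX : StatGauss P X) {α : ℝ} (hα₀ : 0 < α) (hα₁ : α ≤ π)
    (hXf : HasSpecDensity P X fun q =>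
      if q.1 ∈ Set.Icc (-α) α ∧ q.2 ∈ Set.Icc (-α) α then 1 else 0)
    {μf : Measure ℝ} [IsFiniteMeasure μf] (hconv : ESDTendstoInProb P (scaledW X) μf) :
    μf = ENNReal.ofReal (1 - α / π) • Measure.dirac 0 +
        ENNReal.ofReal (α / π) • WSL (8 * π * α) ∧
      (α < π → μf {0} ≠ 0) := by
  have hlaw : μf = ENNReal.ofReal (1 - α / π) • Measure.dirac 0 +
      ENNReal.ofReal (α / π) • WSL (8 * π * α) := by
    have hblock : ESDTendstoInProb P (fun N ω => symMat (scaledBlock X N ω)) μf := by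
      simpa only [ESDTendstoInProb, scaledW_eq_symMat] using hconv
    have hmix := (isAsymptoticProjection_toeplitz_cosCoeff hα₀.le hα₁).eq_dirac_add_WSL
      (by positivity) (hX.isKroneckerGaussian_scaledBlock hα₀.le hα₁ hXf) hblock
    rwa [mul_div_mul_left _ _ two_ne_zero, show 2 * (2 * π) * (2 * α) = 8 * π * α by ring] at hmix
  refine ⟨hlaw, fun hα => ?_⟩
  simp [hlaw, ((div_lt_one pi_pos).2 hα).not_ge]

/-- **Example 4.2.** For the density `f = 1_{[-π/2,π/2]²}`, the limiting
spectral distribution is `(1/2) δ₀ + (1/2) WSL(4π²)`; in particular it has an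
atom, so it is not a continuous probability measure. -/
theorem statement18 {Ω : Type} [MeasurableSpace Ω] (P : Measure Ω)
    [IsProbabilityMeasure P] (X : ℤ → ℤ → Ω → ℝ)
    (hX : StatGauss P X)
    (hXf : HasSpecDensity P X (fun q =>
      if q.1 ∈ Set.Icc (-(π / 2)) (π / 2) ∧ q.2 ∈ Set.Icc (-(π / 2)) (π / 2)
      then 1 else 0))
    (μf : Measure ℝ) (hμf : IsProbabilityMeasure μf)
    (hconv : ESDTendstoInProb P (scaledW X) μf) :
    μf = (2⁻¹ : ENNReal) • Measure.dirac (0 : ℝ)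
        + (2⁻¹ : ENNReal) • WSL (4 * π ^ 2) ∧
    ∃ t : ℝ, μf {t} ≠ 0 := by
  obtain ⟨hlaw, hatom⟩ := statement18_general hX pi_div_two_pos (by linarith [pi_pos]) hXf hconv
  refine ⟨?_, 0, hatom (by linarith [pi_pos])⟩
  have hhalf : π / 2 / π = 2⁻¹ := by field_simp
  rwa [hhalf, show 1 - (2⁻¹ : ℝ) = 2⁻¹ by norm_num, ENNReal.ofReal_inv_of_pos two_pos,
    ENNReal.ofReal_ofNat, show 8 * π * (π / 2) = 4 * π ^ 2 by ring] at hlaw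

end
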